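/- arXiv:1808.03613 — 4 statements merged into one kernel-verified Lean document; each statement's English description precedes it below -/
import Mathlib

section
/- Let q be a prime power, F_q a finite field with q elements, and let K, m1, m2, m12 be integers with m1, m2 ≥ K ≥ 0 and 0 ≤ m12 ≤ min(m1, m2). Let S be an m12×K, A1 an (m1−m12)×K, and A2 an (m2−m12)×K random matrix over F_q, all entries independent and uniform on F_q; set X1 = [S; A1] and X2 = [S; A2] (vertical stacking), so X1 and X2 share the m12 common rows S. Then the probability that X1 and X2 simultaneously have rank K equals P2((m1, m2, m12), K) = ∑_{i = max(0, K−m1+m12, K−m2+m12)}^{min(m12, K)} P_i(m12, K) · P(m1 − m12, K − i) · P(m2 − m12, K − i). -/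
open Finset

/-- `P(m,K) = ∏_{i=0}^{K-1} (1 - q^{i-m})`. -/
noncomputable def Pfr (q m K : ℕ) : ℝ :=
  ∏ i ∈ Finset.range K, (1 - (q : ℝ) ^ ((i : ℤ) - (m : ℤ)))

/-- The Gaussian binomial coefficient `[K; r]_q`. -/
noncomputable def gaussBinom (q K r : ℕ) : ℝ :=
  ∏ i ∈ Finset.range r, (((q : ℝ) ^ (K - i) - 1) / ((q : ℝ) ^ (r - i) - 1))

/-- `P_r(m,K) = q^{-m(K-r)} · [K; r]_q · ∏_{i=0}^{r-1} (1 - q^{i-m})`. -/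
noncomputable def Prk (q m K r : ℕ) : ℝ :=
  (q : ℝ) ^ (-(m : ℤ) * ((K : ℤ) - (r : ℤ))) * gaussBinom q K r *
    ∏ i ∈ Finset.range r, (1 - (q : ℝ) ^ ((i : ℤ) - (m : ℤ)))

/-- `P2((m1,m2,m12),K)`: the lower summation bound `max(0, K-m1+m12, K-m2+m12)` is
expressed using truncated natural subtraction as `max (K+m12-m1) (K+m12-m2)`. -/
noncomputable def P2 (q K m1 m2 m12 : ℕ) : ℝ :=
  ∑ i ∈ Finset.Icc (max (K + m12 - m1) (K + m12 - m2)) (min m12 K),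
    Prk q m12 K i * Pfr q (m1 - m12) (K - i) * Pfr q (m2 - m12) (K - i)

open Module

/-- `∏_{i<r} (q^m - q^i)`, the number of injective linear maps `F_q^r → F_q^m`. -/
noncomputable def injCount (q m r : ℕ) : ℝ :=
  ∏ i ∈ Finset.range r, ((q : ℝ) ^ m - (q : ℝ) ^ i)

lemma injCount_zero_right (q m : ℕ) : injCount q m 0 = 1 := by
  simp [injCount]

lemma injCount_succ_right (q m r : ℕ) :
    injCount q m (r + 1) = injCount q m r * ((q : ℝ) ^ m - (q : ℝ) ^ r) := by
  simp [injCount, Finset.prod_range_succ]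

lemma injCount_succ_succ (q m r : ℕ) :
    injCount q (m + 1) (r + 1) = ((q : ℝ) ^ (m + 1) - 1) * (q : ℝ) ^ r * injCount q m r := by
  have h : ∀ i ∈ Finset.range r, (q : ℝ) ^ (m + 1) - (q : ℝ) ^ (i + 1) =
      q * ((q : ℝ) ^ m - (q : ℝ) ^ i) := fun i _ => by ring
  rw [injCount, Finset.prod_range_succ', Finset.prod_congr rfl h, Finset.prod_mul_distrib,
    Finset.prod_const, Finset.card_range, injCount, pow_zero]
  ring

lemma injCount_eq_zero {q m r : ℕ} (h : m < r) : injCount q m r = 0 :=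
  Finset.prod_eq_zero (Finset.mem_range.2 h) (sub_self _)

lemma injCount_self_ne_zero {q : ℕ} (hq : 1 < q) (r : ℕ) : injCount q r r ≠ 0 := by
  refine Finset.prod_ne_zero_iff.2 fun i hi => sub_ne_zero.2 (ne_of_gt ?_)
  exact pow_lt_pow_right₀ (by exact_mod_cast hq) (Finset.mem_range.1 hi)

lemma Pfr_eq_injCount_div {q : ℕ} (hq : 1 < q) (m K : ℕ) :
    Pfr q m K = injCount q m K / (q : ℝ) ^ (m * K) := by
  have hq0 : (q : ℝ) ≠ 0 := by positivity
  have h : ∀ i ∈ Finset.range K, 1 - (q : ℝ) ^ ((i : ℤ) - (m : ℤ)) =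
      ((q : ℝ) ^ m - (q : ℝ) ^ i) / (q : ℝ) ^ m := fun i _ => by
    rw [zpow_sub₀ hq0, zpow_natCast, zpow_natCast]
    field_simp
  rw [Pfr, Finset.prod_congr rfl h, Finset.prod_div_distrib, Finset.prod_const,
    Finset.card_range, injCount, pow_mul]

lemma gaussBinom_eq_injCount_div {q : ℕ} (hq : 1 < q) {K r : ℕ} (hr : r ≤ K) :
    gaussBinom q K r = injCount q K r / injCount q r r := by
  have hq0 : (q : ℝ) ≠ 0 := by positivity
  rw [gaussBinom, injCount, injCount, ← Finset.prod_div_distrib]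
  refine Finset.prod_congr rfl fun i hi => ?_
  have hi : i < r := Finset.mem_range.1 hi
  have hsub : ∀ n, i ≤ n → (q : ℝ) ^ n - (q : ℝ) ^ i = (q : ℝ) ^ i * ((q : ℝ) ^ (n - i) - 1) :=
    fun n hn => by rw [mul_sub, ← pow_add, Nat.add_sub_cancel' hn, mul_one]
  rw [hsub K (by omega), hsub r hi.le, mul_div_mul_left _ _ (pow_ne_zero _ hq0)]

lemma Prk_eq_injCount_div {q : ℕ} (hq : 1 < q) (m : ℕ) {K r : ℕ} (hr : r ≤ K) :
    Prk q m K r =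
      injCount q m r * injCount q K r / injCount q r r / (q : ℝ) ^ (m * K) := by
  have hq0 : (q : ℝ) ≠ 0 := by positivity
  have hP := Pfr_eq_injCount_div hq m r
  rw [Pfr] at hP
  obtain ⟨d, rfl⟩ := Nat.exists_eq_add_of_le hr
  have hz : (q : ℝ) ^ (-(m : ℤ) * (((r + d : ℕ) : ℤ) - (r : ℤ))) = ((q : ℝ) ^ (m * d))⁻¹ := by
    rw [← zpow_natCast, ← zpow_neg]
    congr 1
    push_cast
    ring
  rw [Prk, hP, gaussBinom_eq_injCount_div hq hr, hz, mul_add, pow_add]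
  have := injCount_self_ne_zero hq r
  field_simp

lemma span_range_cons {F V : Type*} [Field F] [AddCommGroup V] [Module F V] {m : ℕ} (v : V)
    (w : Fin m → V) :
    Submodule.span F (Set.range (Fin.cons v w : Fin (m + 1) → V)) =
      Submodule.span F (Set.range w) ⊔ Submodule.span F {v} := by
  rw [Fin.range_cons, Submodule.span_insert, sup_comm]

lemma sum_fin_succ_arrow {V : Type*} [Fintype V] {m : ℕ} (g : (Fin (m + 1) → V) → ℝ) :
    ∑ w, g w = ∑ v : V, ∑ w : Fin m → V, g (Fin.cons v w) := by
  rw [← Fintype.sum_prod_type', ← (Fin.consEquiv fun _ : Fin (m + 1) => V).sum_comp]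
  rfl

section Counting

variable {F V : Type*} [Field F] [Fintype F] [AddCommGroup V] [Module F V] [Fintype V]

open Classical in
lemma sum_ite_mem_submodule (U : Submodule F V) (x y : ℝ) :
    ∑ v : V, (if v ∈ U then x else y) =
      (Fintype.card F : ℝ) ^ finrank F U * x +
        ((Fintype.card F : ℝ) ^ finrank F V - (Fintype.card F : ℝ) ^ finrank F U) * y := by
  have hU : ((Finset.univ.filter (fun v : V => v ∈ U)).card : ℝ) =
      (Fintype.card F : ℝ) ^ finrank F U := by
    rw [← Fintype.card_subtype, ← Nat.cast_pow, ← Module.card_eq_pow_finrank (K := F) (V := U)]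
  have hV := Finset.card_filter_add_card_filter_not (s := (Finset.univ : Finset V)) (fun v => v ∈ U)
  rw [Finset.card_univ, Module.card_eq_pow_finrank (K := F) (V := V)] at hV
  have hV' : ((Finset.univ.filter (fun v : V => v ∈ U)).card : ℝ) +
      ((Finset.univ.filter (fun v : V => v ∉ U)).card : ℝ) =
      (Fintype.card F : ℝ) ^ finrank F V := by exact_mod_cast hV
  rw [Finset.sum_ite, Finset.sum_const, Finset.sum_const, nsmul_eq_mul, nsmul_eq_mul, ← hV', hU]
  ring

open Classical in
/-- The number of ways to complete a subspace of codimension `d` to the whole space by adjoining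
`a` vectors. -/
lemma sum_sup_span_eq_top (a : ℕ) : ∀ (d : ℕ) (U : Submodule F V), finrank F U + d = finrank F V →
    ∑ w : Fin a → V, (if U ⊔ Submodule.span F (Set.range w) = ⊤ then (1 : ℝ) else 0) =
      (Fintype.card F : ℝ) ^ (a * finrank F U) * injCount (Fintype.card F) a d := by
  induction a with
  | zero =>
    intro d U hU
    have htop : U = ⊤ ↔ d = 0 := by
      constructor
      · rintro rfl
        rw [finrank_top] at hU
        omega
      · rintro rfl
        exact Submodule.eq_top_of_finrank_eq hU
    rcases Nat.eq_zero_or_pos d with rfl | hd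
    · simp [htop, injCount_zero_right]
    · simp [htop, injCount_eq_zero hd, hd.ne']
  | succ a ih =>
    intro d U hU
    set q := Fintype.card F with hq
    rw [sum_fin_succ_arrow]
    have key : ∀ v : V,
        ∑ w : Fin a → V, (if U ⊔ Submodule.span F (Set.range (Fin.cons v w : Fin (a + 1) → V)) = ⊤
          then (1 : ℝ) else 0) =
        if v ∈ U then (q : ℝ) ^ (a * finrank F U) * injCount q a d
        else (q : ℝ) ^ (a * (finrank F U + 1)) * injCount q a (d - 1) := by
      intro v
      simp_rw [span_range_cons, sup_comm _ (Submodule.span F {v}), ← sup_assoc]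
      split_ifs with hv
      · rw [sup_eq_left.2 ((Submodule.span_singleton_le_iff_mem v U).2 hv), ih d U hU]
      · have hr := Submodule.finrank_sup_span_singleton hv
        have hle := Submodule.finrank_le (U ⊔ Submodule.span F {v})
        rw [ih (d - 1) _ (by omega), hr]
    rw [Finset.sum_congr rfl fun v _ => key v, sum_ite_mem_submodule, ← hU, ← hq]
    cases d with
    | zero => simp only [injCount_zero_right, add_zero]; ring
    | succ e =>
      rw [Nat.add_sub_cancel, injCount_succ_right, injCount_succ_succ]
      ring

open Classical in
/-- The number of `m`-tuples of vectors spanning a subspace of dimension `r`. -/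
lemma sum_finrank_span_eq (hq : 1 < Fintype.card F) (m : ℕ) : ∀ r : ℕ,
    ∑ w : Fin m → V, (if finrank F (Submodule.span F (Set.range w)) = r then (1 : ℝ) else 0) =
      injCount (Fintype.card F) m r * injCount (Fintype.card F) (finrank F V) r /
        injCount (Fintype.card F) r r := by
  induction m with
  | zero =>
    intro r
    rcases Nat.eq_zero_or_pos r with rfl | hr
    · simp [injCount_zero_right]
    · have h0 : ∀ w : Fin 0 → V, finrank F (Submodule.span F (Set.range w)) = 0 := fun w => by
        rw [Set.range_eq_empty, Submodule.span_empty, finrank_bot]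
      simp [injCount_eq_zero hr, h0, hr.ne]
  | succ m ih =>
    intro r
    set q := Fintype.card F with hqdef
    rw [sum_fin_succ_arrow, Finset.sum_comm]
    have key : ∀ w : Fin m → V,
        ∑ v : V, (if finrank F (Submodule.span F (Set.range (Fin.cons v w : Fin (m + 1) → V))) = r
          then (1 : ℝ) else 0) =
        (q : ℝ) ^ r *
          (if finrank F (Submodule.span F (Set.range w)) = r then 1 else 0) +
        ((q : ℝ) ^ finrank F V - (q : ℝ) ^ (r - 1)) *
          (if finrank F (Submodule.span F (Set.range w)) + 1 = r then 1 else 0) := by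
      intro w
      set U := Submodule.span F (Set.range w) with hUdef
      have h : ∀ v : V,
          (if finrank F (Submodule.span F (Set.range (Fin.cons v w : Fin (m + 1) → V))) = r
            then (1 : ℝ) else 0) =
          if v ∈ U then (if finrank F U = r then 1 else 0)
          else (if finrank F U + 1 = r then 1 else 0) := by
        intro v
        rw [span_range_cons, ← hUdef]
        by_cases hv : v ∈ U
        · rw [sup_eq_left.2 ((Submodule.span_singleton_le_iff_mem v U).2 hv), if_pos hv]
        · rw [Submodule.finrank_sup_span_singleton hv, if_neg hv]
      rw [Finset.sum_congr rfl fun v _ => h v, sum_ite_mem_submodule]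
      congr 1
      · split_ifs with h
        · rw [h]
        · simp
      · split_ifs with h
        · rw [← h, Nat.add_sub_cancel]
        · simp
    rw [Finset.sum_congr rfl fun w _ => key w, Finset.sum_add_distrib, ← Finset.mul_sum,
      ← Finset.mul_sum, ih r]
    cases r with
    | zero => simp [injCount_zero_right]
    | succ r =>
      simp only [Nat.add_right_cancel_iff, Nat.add_sub_cancel]
      rw [ih r, injCount_succ_succ q m r, injCount_succ_succ q r r, injCount_succ_right q m,
        injCount_succ_right q (finrank F V)]
      have h0 := injCount_self_ne_zero hq r
      have h1 : (q : ℝ) ^ (r + 1) - 1 ≠ 0 :=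
        sub_ne_zero.2 (one_lt_pow₀ (by exact_mod_cast hq) r.succ_ne_zero).ne'
      have h2 : (q : ℝ) ≠ 0 := by positivity
      field_simp
      ring

end Counting

lemma rank_fromRows_eq_iff {F : Type*} [Field F] {m n K : ℕ}
    (S : Matrix (Fin m) (Fin K) F) (A : Matrix (Fin n) (Fin K) F) :
    (Matrix.fromRows S A).rank = K ↔
      Submodule.span F (Set.range S.row) ⊔ Submodule.span F (Set.range A.row) = ⊤ := by
  have h : Set.range (Matrix.fromRows S A).row = Set.range S.row ∪ Set.range A.row := by
    ext v
    simp only [Set.mem_union, Set.mem_range, Sum.exists]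
    rfl
  rw [Matrix.rank_eq_finrank_span_row, h, Submodule.span_union]
  constructor
  · intro hK
    exact Submodule.eq_top_of_finrank_eq (by rw [hK, finrank_fin_fun])
  · intro hK
    rw [hK, finrank_top, finrank_fin_fun]

section Matrix

variable {F : Type*} [Field F] [Fintype F]

lemma sum_rank_fromRows_eq {m K : ℕ} (n : ℕ) (S : Matrix (Fin m) (Fin K) F) :
    ∑ A : Matrix (Fin n) (Fin K) F,
      (if (Matrix.fromRows S A).rank = K then (1 : ℝ) else 0) =
      (Fintype.card F : ℝ) ^ (n * K) * Pfr (Fintype.card F) n (K - S.rank) := by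
  classical
  have hle : S.rank ≤ K := by simpa using S.rank_le_width
  have hrow := S.rank_eq_finrank_span_row
  have h := sum_sup_span_eq_top n (K - S.rank) (Submodule.span F (Set.range S.row))
    (by rw [← hrow, finrank_fin_fun]; omega)
  rw [← hrow] at h
  have hq : 1 < Fintype.card F := Fintype.one_lt_card
  have hq0 : (Fintype.card F : ℝ) ≠ 0 := by positivity
  rw [Pfr_eq_injCount_div hq, mul_div_left_comm, div_eq_mul_inv,
    ← pow_sub₀ _ hq0 (Nat.mul_le_mul_left _ (by omega)), ← Nat.mul_sub, Nat.sub_sub_self hle, mul_comm, ← h]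
  refine Fintype.sum_congr _ _ fun A => ?_
  simp only [rank_fromRows_eq_iff]
  rfl

lemma sum_rank_eq (m : ℕ) {K r : ℕ} (hr : r ≤ K) :
    ∑ S : Matrix (Fin m) (Fin K) F, (if S.rank = r then (1 : ℝ) else 0) =
      (Fintype.card F : ℝ) ^ (m * K) * Prk (Fintype.card F) m K r := by
  classical
  have hq : 1 < Fintype.card F := Fintype.one_lt_card
  have hq0 : (Fintype.card F : ℝ) ≠ 0 := by positivity
  have h := sum_finrank_span_eq (F := F) (V := Fin K → F) hq m r
  rw [finrank_fin_fun] at h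
  rw [Prk_eq_injCount_div hq m hr, mul_div_cancel₀ _ (pow_ne_zero _ hq0), ← h]
  refine Fintype.sum_congr _ _ fun S => ?_
  simp only [Matrix.rank_eq_finrank_span_row]
  rfl

end Matrix

/-- `S`, `A1`, `A2` independent uniformly random matrices over a finite
field with `q` elements, of sizes `m12 × K`, `(m1-m12) × K`, `(m2-m12) × K`; with
`X1 = [S; A1]` and `X2 = [S; A2]`, the probability that both `X1` and `X2` have rank
`K` equals `P2((m1,m2,m12),K)`. -/
theorem joint_full_rank_prob (q : ℕ) (F : Type) [Field F] [Fintype F] [DecidableEq F]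
    (hF : Fintype.card F = q) (K m1 m2 m12 : ℕ)
    (h1 : K ≤ m1) (h2 : K ≤ m2) (h12 : m12 ≤ min m1 m2) :
    ((Finset.univ.filter
        (fun X : Matrix (Fin m12) (Fin K) F × Matrix (Fin (m1 - m12)) (Fin K) F ×
            Matrix (Fin (m2 - m12)) (Fin K) F =>
          (Matrix.fromRows X.1 X.2.1).rank = K ∧
          (Matrix.fromRows X.1 X.2.2).rank = K)).card : ℝ) /
      (Fintype.card (Matrix (Fin m12) (Fin K) F × Matrix (Fin (m1 - m12)) (Fin K) F ×
        Matrix (Fin (m2 - m12)) (Fin K) F) : ℝ) =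
    P2 q K m1 m2 m12 := by
  subst hF
  set q := Fintype.card F with hqdef
  have hq : 1 < q := Fintype.one_lt_card
  have hq0 : (q : ℝ) ≠ 0 := by positivity
  have hcard : ∀ n, Fintype.card (Matrix (Fin n) (Fin K) F) = q ^ (n * K) := fun n => by
    rw [Module.card_eq_pow_finrank (K := F), Module.finrank_matrix]
    simp [hqdef]
  set c : ℕ → ℝ := fun i => Pfr q (m1 - m12) (K - i) * Pfr q (m2 - m12) (K - i) with hc
  set N : ℝ := (q : ℝ) ^ ((m1 - m12) * K) * (q : ℝ) ^ ((m2 - m12) * K) with hN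
  have hinner : ∀ S : Matrix (Fin m12) (Fin K) F,
      ∑ A : Matrix (Fin (m1 - m12)) (Fin K) F × Matrix (Fin (m2 - m12)) (Fin K) F,
        (if (Matrix.fromRows S A.1).rank = K ∧ (Matrix.fromRows S A.2).rank = K
          then (1 : ℝ) else 0) =
      ∑ i ∈ Finset.range (min m12 K + 1), N * c i * (if S.rank = i then 1 else 0) := by
    intro S
    have hm : S.rank ≤ m12 := by simpa using S.rank_le_height
    have hK : S.rank ≤ K := by simpa using S.rank_le_width
    simp only [mul_ite, mul_one, mul_zero, Finset.sum_ite_eq]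
    rw [if_pos (Finset.mem_range.2 (by omega)), Fintype.sum_prod_type]
    simp only [ite_and]
    have hprod : ∀ (A : Matrix (Fin (m1 - m12)) (Fin K) F)
        (B : Matrix (Fin (m2 - m12)) (Fin K) F),
        (if (Matrix.fromRows S A).rank = K then
          (if (Matrix.fromRows S B).rank = K then (1 : ℝ) else 0) else 0) =
        (if (Matrix.fromRows S A).rank = K then (1 : ℝ) else 0) *
          (if (Matrix.fromRows S B).rank = K then (1 : ℝ) else 0) := fun A B => by
      rw [ite_mul, one_mul, zero_mul]
    simp only [hprod]
    rw [← Finset.sum_mul_sum, sum_rank_fromRows_eq, sum_rank_fromRows_eq, hN, hc]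
    ring
  have hcount : ((Finset.univ.filter
        (fun X : Matrix (Fin m12) (Fin K) F × Matrix (Fin (m1 - m12)) (Fin K) F ×
            Matrix (Fin (m2 - m12)) (Fin K) F =>
          (Matrix.fromRows X.1 X.2.1).rank = K ∧
          (Matrix.fromRows X.1 X.2.2).rank = K)).card : ℝ) =
      (q : ℝ) ^ (m12 * K) * N *
        ∑ i ∈ Finset.range (min m12 K + 1), Prk q m12 K i * c i := by
    rw [← Finset.sum_boole, Fintype.sum_prod_type, Finset.sum_congr rfl fun S _ => hinner S,
      Finset.sum_comm, Finset.mul_sum]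
    refine Finset.sum_congr rfl fun i hi => ?_
    have hi := Finset.mem_range.1 hi
    rw [← Finset.mul_sum, sum_rank_eq m12 (show i ≤ K by omega)]
    ring
  have hP2 : ∑ i ∈ Finset.range (min m12 K + 1), Prk q m12 K i * c i = P2 q K m1 m2 m12 := by
    rw [P2]
    symm
    simp only [mul_assoc]
    refine Finset.sum_subset (fun i hi => ?_) fun i hi hi' => ?_
    · rw [Finset.mem_Icc] at hi
      exact Finset.mem_range.2 (by omega)
    · rw [Finset.mem_range] at hi
      rw [Finset.mem_Icc] at hi'
      have hlt : m1 - m12 < K - i ∨ m2 - m12 < K - i := by omega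
      rcases hlt with hlt | hlt <;>
        simp [Pfr_eq_injCount_div hq _ (K - i), injCount_eq_zero hlt]
  rw [hcount, hP2, Fintype.card_prod, Fintype.card_prod, hcard, hcard, hcard, hN]
  push_cast
  field_simp
end

section
/- Let q be a prime power, F_q a finite field with q elements, let h ≥ 1, K ≥ 1 and N_1, …, N_h ≥ K be integers, and ε_1, …, ε_h ∈ [0,1]. Consider the h-hop tandem network: node 0 draws a uniformly random N_1×K matrix C over F_q; for each hop i = 1, …, h, node i receives each of node (i−1)'s N_i packets independently with probability 1−ε_i, and (for i < h) node i recodes its received packets by applying an independent uniformly random N_{i+1}×(number of received packets) matrix over F_q to the received coefficient rows. Then the probability that the coefficient matrix held by node h (the received rows at the last hop) has rank K equals ∏_{i=1}^{h} [∑_{m=K}^{N_i} B(m, N_i, ε_i) P(m, K)]. -/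
open Finset

/-- Binomial probability `B(m,N,ε) = C(N,m) (1-ε)^m ε^{N-m}`. -/
noncomputable def Bpmf (m N : ℕ) (ε : ℝ) : ℝ :=
  (N.choose m : ℝ) * (1 - ε) ^ m * ε ^ (N - m)

/-- Replace the rows not received (pattern `f`) by zero rows; multiplying a recoding
matrix by this zeroed matrix is the same as multiplying the submatrix of the recoding
matrix consisting of the columns of received packets by the received rows. -/
def zeroRows {F : Type} [Field F] {n K : ℕ} (f : Fin n → Bool)
    (M : Matrix (Fin n) (Fin K) F) : Matrix (Fin n) (Fin K) F :=
  Matrix.of fun i k => if f i then M i k else 0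

/-- The coefficient matrix transmitted over hop `t` (0-indexed): `held ... 0 = C` and
`held ... (t+1) = G t * zeroRows (f t) (held ... t)`, i.e. node `t+1` recodes the
packets it received over hop `t` with the uniformly random matrix `G t`. -/
def held {F : Type} [Field F] (K : ℕ) (N : ℕ → ℕ)
    (C : Matrix (Fin (N 0)) (Fin K) F)
    (f : (i : ℕ) → Fin (N i) → Bool)
    (G : (i : ℕ) → Matrix (Fin (N (i + 1))) (Fin (N i)) F) :
    (t : ℕ) → Matrix (Fin (N t)) (Fin K) F
  | 0 => C
  | (t + 1) => G t * zeroRows (f t) (held K N C f G t)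

/-- Averaging over the source of a surjective homomorphism of finite groups is averaging over its
target. -/
lemma AddMonoidHom.average_comp {A B : Type*} [AddGroup A] [Fintype A] [AddGroup B] [Fintype B]
    (g : A →+ B) (hg : Function.Surjective g) (φ : B → ℝ) :
    (Fintype.card A : ℝ)⁻¹ * ∑ a, φ (g a) = (Fintype.card B : ℝ)⁻¹ * ∑ b, φ b := by
  classical
  have hfib (b : B) : #{a | g a = b} = #{a | g a = 0} :=
    AddMonoidHom.card_fiber_eq_of_mem_range g (hg b) (hg 0)
  have hsum : ∑ a, φ (g a) = #{a | g a = 0} * ∑ b, φ b := by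
    rw [← Finset.sum_fiberwise' univ g φ, Finset.mul_sum]
    simp [hfib]
  have hcard : Fintype.card A = #{a | g a = 0} * Fintype.card B := by
    rw [← Finset.card_univ, Finset.card_eq_sum_card_fiberwise (f := g) (t := univ) (by simp)]
    simp [hfib, mul_comm]
  have hA : (Fintype.card A : ℝ) ≠ 0 := by simp
  have hB : (Fintype.card B : ℝ) ≠ 0 := by simp
  rw [hsum]
  rw [hcard] at hA ⊢
  push_cast at hA ⊢
  field_simp [left_ne_zero_of_mul hA]

namespace Matrix

lemma rank_eq_card_iff_mulVec_injective {F ι κ : Type*} [Field F] [Fintype ι] [Fintype κ]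
    (A : Matrix ι κ F) : A.rank = Fintype.card κ ↔ Function.Injective A.mulVec := by
  rw [mulVec_injective_iff, linearIndependent_iff_card_eq_finrank_span,
    rank_eq_finrank_span_cols, eq_comm]
  rfl

/-- Left multiplication by a uniform matrix turns an injective matrix into a uniform one. -/
lemma average_mul_of_mulVec_injective {F ι κ μ : Type*} [Field F] [Fintype F]
    [Fintype ι] [DecidableEq ι] [Fintype κ] [DecidableEq κ] [Fintype μ] [DecidableEq μ]
    {A : Matrix ι κ F} (hA : Function.Injective A.mulVec) (φ : Matrix μ κ F → ℝ) :
    (Fintype.card (Matrix μ ι F) : ℝ)⁻¹ * ∑ G : Matrix μ ι F, φ (G * A) =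
      (Fintype.card (Matrix μ κ F) : ℝ)⁻¹ * ∑ C, φ C := by
  obtain ⟨g, hg⟩ := A.mulVecLin.exists_leftInverse_of_injective (LinearMap.ker_eq_bot.2 hA)
  have hB : LinearMap.toMatrix' g * A = 1 := by
    simpa [LinearMap.toMatrix'_comp, ← Matrix.toLin'_apply'] using
      congrArg LinearMap.toMatrix' hg
  refine AddMonoidHom.average_comp (addMonoidHomMulRight A)
    (fun C => ⟨C * LinearMap.toMatrix' g, ?_⟩) φ
  simp [addMonoidHomMulRight, Matrix.mul_assoc, hB]

/-- The probability that a uniform matrix is injective. -/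
lemma average_mulVec_injective {F ι : Type*} [Field F] [Fintype F] [Fintype ι] [DecidableEq ι]
    [DecidableEq F] (K : ℕ) :
    (Fintype.card (Matrix ι (Fin K) F) : ℝ)⁻¹ *
        ∑ C : Matrix ι (Fin K) F, (if Function.Injective C.mulVec then 1 else 0) =
      if K ≤ Fintype.card ι then Pfr (Fintype.card F) (Fintype.card ι) K else 0 := by
  classical
  split_ifs with hK
  · have hcount : #{C : Matrix ι (Fin K) F | Function.Injective C.mulVec} =
        ∏ i : Fin K, (Fintype.card F ^ Fintype.card ι - Fintype.card F ^ i.val) := by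
      have := card_linearIndependent (K := F) (V := ι → F) (k := K) (by simpa using hK)
      rw [Module.finrank_fintype_fun_eq_card] at this
      rw [← this, ← Fintype.card_subtype, ← Nat.card_eq_fintype_card]
      refine Nat.card_congr ((transposeAddEquiv ι (Fin K) F).toEquiv.subtypeEquiv fun C => ?_)
      rw [mulVec_injective_iff]
      rfl
    have hq : (Fintype.card F : ℝ) ≠ 0 := by simp
    rw [Finset.sum_boole, hcount, Pfr, ← Fin.prod_univ_eq_prod_range
      (fun i => 1 - (Fintype.card F : ℝ) ^ ((i : ℤ) - (Fintype.card ι : ℤ)))]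
    have hcard : (Fintype.card (Matrix ι (Fin K) F) : ℝ) =
        ∏ _i : Fin K, (Fintype.card F : ℝ) ^ Fintype.card ι := by
      rw [← Nat.card_eq_fintype_card]
      simp [Matrix, ← pow_mul, mul_comm]
    rw [hcard, ← Finset.prod_inv_distrib]
    push_cast
    rw [← Finset.prod_mul_distrib]
    refine Finset.prod_congr rfl fun i _ => ?_
    rw [Nat.cast_sub (Nat.pow_le_pow_right Fintype.card_pos (i.2.le.trans hK)), zpow_sub₀ hq]
    simp only [Nat.cast_pow, zpow_natCast]
    field_simp
  · rw [Finset.sum_eq_zero, mul_zero]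
    intro C _
    rw [if_neg]
    intro hC
    have := C.rank_le_card_height
    rw [(rank_eq_card_iff_mulVec_injective C).2 hC] at this
    simp at this
    omega

end Matrix

section Reception

variable {F : Type} [Field F] {n K : ℕ}

lemma zeroRows_mulVec (f : Fin n → Bool) (M : Matrix (Fin n) (Fin K) F) (v : Fin K → F) :
    (zeroRows f M).mulVec v = fun i => if f i then M.mulVec v i else 0 := by
  ext i
  by_cases hi : f i <;> simp [zeroRows, Matrix.mulVec, dotProduct, hi]

lemma zeroRows_mulVec_injective_iff (f : Fin n → Bool) (M : Matrix (Fin n) (Fin K) F) :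
    Function.Injective (zeroRows f M).mulVec ↔
      Function.Injective (M.submatrix (fun j : {j // f j = true} => (j : Fin n)) id).mulVec := by
  refine forall₂_congr fun v w => imp_congr_left ?_
  simp only [zeroRows_mulVec, funext_iff, Subtype.forall]
  refine forall_congr' fun i => ?_
  by_cases hi : f i <;> simp [hi, Matrix.mulVec, dotProduct]

lemma mulVec_injective_of_zeroRows {f : Fin n → Bool} {M : Matrix (Fin n) (Fin K) F}
    (hM : Function.Injective (zeroRows f M).mulVec) : Function.Injective M.mulVec :=
  fun v w hvw => hM (by rw [zeroRows_mulVec, zeroRows_mulVec, hvw])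

/-- The probability of the reception pattern `f` on a hop with erasure probability `ε`. -/
noncomputable def receptionWeight (ε : ℝ) (f : Fin n → Bool) : ℝ :=
  ∏ j, if f j then 1 - ε else ε

lemma receptionWeight_eq (ε : ℝ) (f : Fin n → Bool) :
    receptionWeight ε f = (1 - ε) ^ #{j | f j} * ε ^ (n - #{j | f j}) := by
  rw [receptionWeight, Finset.prod_ite, Finset.prod_const, Finset.prod_const]
  congr 2
  have := Finset.card_filter_add_card_filter_not (s := (univ : Finset (Fin n)))
    (fun j => f j = true)
  simp only [card_univ, Fintype.card_fin] at this
  omega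

lemma sum_receptionWeight (ε : ℝ) (φ : ℕ → ℝ) :
    ∑ f : Fin n → Bool, receptionWeight ε f * φ #{j | f j} =
      ∑ m ∈ range (n + 1), Bpmf m n ε * φ m := by
  have h := Finset.sum_powerset_apply_card (x := (univ : Finset (Fin n)))
    (fun m => (1 - ε) ^ m * ε ^ (n - m) * φ m)
  simp only [card_univ, Fintype.card_fin, nsmul_eq_mul, powerset_univ] at h
  simp only [Bpmf, mul_assoc] at h ⊢
  rw [← h]
  refine Fintype.sum_bijective (fun f : Fin n → Bool => ({j | f j} : Finset (Fin n))) ?_ _ _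
    fun f => by rw [receptionWeight_eq, mul_assoc]
  refine ⟨fun f g hfg => ?_, fun s => ⟨fun j => decide (j ∈ s), by ext; simp⟩⟩
  ext j
  simpa using Finset.ext_iff.1 hfg j

/-- The probability that a uniform matrix remains injective after one lossy hop. -/
lemma average_reception [Fintype F] [DecidableEq F] (ε : ℝ) :
    (Fintype.card (Matrix (Fin n) (Fin K) F) : ℝ)⁻¹ *
        ∑ C : Matrix (Fin n) (Fin K) F, ∑ f : Fin n → Bool,
          (if Function.Injective (zeroRows f C).mulVec then receptionWeight ε f else 0) =
      ∑ m ∈ Icc K n, Bpmf m n ε * Pfr (Fintype.card F) m K := by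
  classical
  have hfix (f : Fin n → Bool) : (Fintype.card (Matrix (Fin n) (Fin K) F) : ℝ)⁻¹ *
        ∑ C : Matrix (Fin n) (Fin K) F,
          (if Function.Injective (zeroRows f C).mulVec then (1 : ℝ) else 0) =
      if K ≤ #{j | f j} then Pfr (Fintype.card F) #{j | f j} K else 0 := by
    simp only [zeroRows_mulVec_injective_iff]
    rw [← Fintype.card_subtype, ← Matrix.average_mulVec_injective]
    refine AddMonoidHom.average_comp
      (A := Matrix (Fin n) (Fin K) F) (B := Matrix {j // f j = true} (Fin K) F)
      { toFun := fun C => C.submatrix (fun j => j) id, map_zero' := rfl, map_add' := fun _ _ => rfl }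
      (fun D => ⟨Matrix.of fun i k => if hi : f i = true then D ⟨i, hi⟩ k else 0, ?_⟩)
      (fun D => if Function.Injective D.mulVec then 1 else 0)
    ext i k
    exact dif_pos i.2
  rw [Finset.sum_comm, Finset.mul_sum]
  have hterm (f : Fin n → Bool) : (Fintype.card (Matrix (Fin n) (Fin K) F) : ℝ)⁻¹ *
        ∑ C : Matrix (Fin n) (Fin K) F,
          (if Function.Injective (zeroRows f C).mulVec then receptionWeight ε f else 0) =
      receptionWeight ε f *
        if K ≤ #{j | f j} then Pfr (Fintype.card F) #{j | f j} K else 0 := by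
    rw [← hfix, mul_left_comm, Finset.mul_sum _ _ (receptionWeight ε f)]
    simp
  simp only [hterm]
  rw [sum_receptionWeight ε (fun m => if K ≤ m then Pfr (Fintype.card F) m K else 0)]
  simp only [mul_ite, mul_zero]
  rw [← Finset.sum_filter]
  congr 1
  ext m
  simp
  omega

end Reception

section Tandem

variable {F : Type} [Field F] {K : ℕ}

/-- Extend the reception patterns of the first `h` hops by total reception. -/
def extendPatterns {N : ℕ → ℕ} {h : ℕ} (f : (i : Fin h) → Fin (N i.1) → Bool) (i : ℕ) :
    Fin (N i) → Bool :=
  if hi : i < h then f ⟨i, hi⟩ else fun _ => true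

/-- Extend the recoding matrices of the first `h` hops by zero. -/
def extendRecodings {N : ℕ → ℕ} {h : ℕ}
    (G : (i : Fin h) → Matrix (Fin (N (i.1 + 1))) (Fin (N i.1)) F) (i : ℕ) :
    Matrix (Fin (N (i + 1))) (Fin (N i)) F :=
  if hi : i < h then G ⟨i, hi⟩ else 0

lemma extendPatterns_cons_succ {N : ℕ → ℕ} {h : ℕ} (f₀ : Fin (N 0) → Bool)
    (f : (i : Fin h) → Fin (N (i.1 + 1)) → Bool) (i : ℕ) :
    extendPatterns (N := N) (h := h + 1) (Fin.cons f₀ f) (i + 1) =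
      extendPatterns (N := fun i => N (i + 1)) f i := by
  simp only [extendPatterns, Nat.add_lt_add_iff_right]
  rfl

lemma extendRecodings_cons_succ {N : ℕ → ℕ} {h : ℕ} (G₀ : Matrix (Fin (N 1)) (Fin (N 0)) F)
    (G : (i : Fin h) → Matrix (Fin (N (i.1 + 1 + 1))) (Fin (N (i.1 + 1))) F) (i : ℕ) :
    extendRecodings (N := N) (h := h + 1) (Fin.cons G₀ G) (i + 1) =
      extendRecodings (N := fun i => N (i + 1)) G i := by
  simp only [extendRecodings, Nat.add_lt_add_iff_right]
  rfl

lemma held_succ_eq (N : ℕ → ℕ) (C : Matrix (Fin (N 0)) (Fin K) F)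
    (f : (i : ℕ) → Fin (N i) → Bool)
    (G : (i : ℕ) → Matrix (Fin (N (i + 1))) (Fin (N i)) F) (t : ℕ) :
    held K N C f G (t + 1) =
      held K (fun i => N (i + 1)) (G 0 * zeroRows (f 0) C) (fun i => f (i + 1))
        (fun i => G (i + 1)) t := by
  induction t with
  | zero => rfl
  | succ t ih => rw [held, ih, held]

lemma mulVec_injective_of_mul {ι κ μ : Type*} [Fintype ι] [Fintype κ]
    {G : Matrix μ ι F} {A : Matrix ι κ F} (h : Function.Injective (G * A).mulVec) :
    Function.Injective A.mulVec :=
  fun v w hvw => h (by rw [← Matrix.mulVec_mulVec, ← Matrix.mulVec_mulVec, hvw])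

lemma mulVec_injective_of_held (N : ℕ → ℕ) (C : Matrix (Fin (N 0)) (Fin K) F)
    (f : (i : ℕ) → Fin (N i) → Bool)
    (G : (i : ℕ) → Matrix (Fin (N (i + 1))) (Fin (N i)) F) (t : ℕ)
    (h : Function.Injective (held K N C f G t).mulVec) : Function.Injective C.mulVec := by
  induction t with
  | zero => exact h
  | succ t ih => exact ih (mulVec_injective_of_zeroRows (mulVec_injective_of_mul h))

/-- The event that node `n + 1` decodes, the packets being sent over hops `0, …, n`. -/
def Decodes (n : ℕ) (N : ℕ → ℕ) (C : Matrix (Fin (N 0)) (Fin K) F)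
    (f : (i : Fin (n + 1)) → Fin (N i.1) → Bool)
    (G : (i : Fin (n + 1)) → Matrix (Fin (N (i.1 + 1))) (Fin (N i.1)) F) : Prop :=
  Function.Injective (zeroRows (extendPatterns f n)
    (held K N C (extendPatterns f) (extendRecodings G) n)).mulVec

lemma decodes_cons_iff (n : ℕ) (N : ℕ → ℕ) (C : Matrix (Fin (N 0)) (Fin K) F)
    (f₀ : Fin (N 0) → Bool) (f : (i : Fin (n + 1)) → Fin (N (i.1 + 1)) → Bool)
    (G₀ : Matrix (Fin (N 1)) (Fin (N 0)) F)
    (G : (i : Fin (n + 1)) → Matrix (Fin (N (i.1 + 1 + 1))) (Fin (N (i.1 + 1))) F) :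
    Decodes (n + 1) N C (Fin.cons f₀ f) (Fin.cons G₀ G) ↔
      Decodes n (fun i => N (i + 1)) (G₀ * zeroRows f₀ C) f G := by
  rw [Decodes, Decodes, held_succ_eq]
  simp only [extendPatterns_cons_succ, extendRecodings_cons_succ]
  rfl

lemma Decodes.mulVec_injective {n : ℕ} {N : ℕ → ℕ} {C : Matrix (Fin (N 0)) (Fin K) F}
    {f : (i : Fin (n + 1)) → Fin (N i.1) → Bool}
    {G : (i : Fin (n + 1)) → Matrix (Fin (N (i.1 + 1))) (Fin (N i.1)) F}
    (h : Decodes n N C f G) : Function.Injective C.mulVec :=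
  mulVec_injective_of_held _ _ _ _ _ (mulVec_injective_of_zeroRows h)

variable [Fintype F]

open Classical in
/-- The probability of decoding at node `n + 1` given the source matrix `C`. -/
noncomputable def decodingProb (n : ℕ) (N : ℕ → ℕ) (ε : ℕ → ℝ)
    (C : Matrix (Fin (N 0)) (Fin K) F) : ℝ :=
  ∑ f : (i : Fin (n + 1)) → Fin (N i.1) → Bool,
    ∑ G : (i : Fin (n + 1)) → Matrix (Fin (N (i.1 + 1))) (Fin (N i.1)) F,
      if Decodes n N C f G then
        (∏ i : Fin (n + 1), (Fintype.card (Matrix (Fin (N (i.1 + 1))) (Fin (N i.1)) F) : ℝ)⁻¹) *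
          ∏ i : Fin (n + 1), receptionWeight (ε i.1) (f i)
      else 0

lemma sum_pi_fin_succ {n : ℕ} {α : Fin (n + 1) → Type*} [∀ i, Fintype (α i)]
    (φ : (∀ i, α i) → ℝ) :
    ∑ x, φ x = ∑ x₀ : α 0, ∑ x : (i : Fin n) → α i.succ, φ (Fin.cons x₀ x) := by
  rw [← (Fin.consEquiv α).sum_comp, Fintype.sum_prod_type]
  rfl

lemma decodingProb_eq_zero {n : ℕ} {N : ℕ → ℕ} {ε : ℕ → ℝ}
    {C : Matrix (Fin (N 0)) (Fin K) F} (hC : ¬ Function.Injective C.mulVec) :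
    decodingProb n N ε C = 0 :=
  Finset.sum_eq_zero fun _ _ => Finset.sum_eq_zero fun _ _ =>
    if_neg fun h => hC h.mulVec_injective

open Classical in
lemma decodingProb_zero (N : ℕ → ℕ) (ε : ℕ → ℝ) (C : Matrix (Fin (N 0)) (Fin K) F) :
    decodingProb 0 N ε C = ∑ f : Fin (N 0) → Bool,
      if Function.Injective (zeroRows f C).mulVec then receptionWeight (ε 0) f else 0 := by
  rw [decodingProb, sum_pi_fin_succ]
  refine Finset.sum_congr rfl fun f _ => ?_
  rw [Fintype.sum_unique]
  by_cases hinj : Function.Injective (zeroRows f C).mulVec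
  · rw [if_pos hinj]
    trans ∑ _G : (i : Fin 1) → Matrix (Fin (N (i.1 + 1))) (Fin (N i.1)) F,
      (Fintype.card (Matrix (Fin (N 1)) (Fin (N 0)) F) : ℝ)⁻¹ * receptionWeight (ε 0) f
    · exact Finset.sum_congr rfl fun G _ => (if_pos hinj).trans (by simp)
    · rw [Finset.sum_const, nsmul_eq_mul, Finset.card_univ, Fintype.card_pi]
      simp
  · rw [if_neg hinj]
    exact Finset.sum_eq_zero fun G _ => if_neg hinj

lemma decodingProb_succ (n : ℕ) (N : ℕ → ℕ) (ε : ℕ → ℝ) (C : Matrix (Fin (N 0)) (Fin K) F) :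
    decodingProb (n + 1) N ε C = ∑ f : Fin (N 0) → Bool, receptionWeight (ε 0) f *
      ((Fintype.card (Matrix (Fin (N 1)) (Fin (N 0)) F) : ℝ)⁻¹ *
        ∑ G : Matrix (Fin (N 1)) (Fin (N 0)) F,
          decodingProb n (fun i => N (i + 1)) (fun i => ε (i + 1)) (G * zeroRows f C)) := by
  classical
  rw [decodingProb, sum_pi_fin_succ]
  refine Finset.sum_congr rfl fun f₀ _ => ?_
  refine (Finset.sum_congr rfl fun f _ => sum_pi_fin_succ _).trans ?_
  rw [Finset.sum_comm]
  simp only [decodingProb, Finset.mul_sum]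
  refine Finset.sum_congr rfl fun G₀ _ => Finset.sum_congr rfl fun f _ =>
    Finset.sum_congr rfl fun G _ => ?_
  rw [if_congr (decodes_cons_iff n N C f₀ f G₀ G) rfl rfl, mul_ite, mul_ite, mul_zero, mul_zero,
    Fin.prod_univ_succ, Fin.prod_univ_succ (fun i => receptionWeight _ _)]
  refine if_congr Iff.rfl ?_ rfl
  simp only [Fin.cons_zero, Fin.cons_succ, Fin.val_succ, Fin.val_zero, zero_add]
  ring

/-- Averaging over the source matrix, the hops contribute independent factors. -/
lemma average_decodingProb (n : ℕ) (N : ℕ → ℕ) (ε : ℕ → ℝ) :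
    (Fintype.card (Matrix (Fin (N 0)) (Fin K) F) : ℝ)⁻¹ *
        ∑ C : Matrix (Fin (N 0)) (Fin K) F, decodingProb n N ε C =
      ∏ i ∈ range (n + 1),
        ∑ m ∈ Icc K (N i), Bpmf m (N i) (ε i) * Pfr (Fintype.card F) m K := by
  classical
  induction n generalizing N ε with
  | zero =>
    simp only [decodingProb_zero, zero_add, prod_range_one]
    rw [← average_reception]
  | succ n ih =>
    have hrec (f : Fin (N 0) → Bool) (C : Matrix (Fin (N 0)) (Fin K) F) :
        (Fintype.card (Matrix (Fin (N 1)) (Fin (N 0)) F) : ℝ)⁻¹ *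
          ∑ G : Matrix (Fin (N 1)) (Fin (N 0)) F,
            decodingProb n (fun i => N (i + 1)) (fun i => ε (i + 1)) (G * zeroRows f C) =
        if Function.Injective (zeroRows f C).mulVec then
          ∏ i ∈ range (n + 1), ∑ m ∈ Icc K (N (i + 1)),
            Bpmf m (N (i + 1)) (ε (i + 1)) * Pfr (Fintype.card F) m K
        else 0 := by
      split_ifs with hinj
      · rw [← ih (fun i => N (i + 1)) (fun i => ε (i + 1))]
        exact Matrix.average_mul_of_mulVec_injective hinj _
      · rw [Finset.sum_eq_zero, mul_zero]
        exact fun G _ => decodingProb_eq_zero fun h => hinj (mulVec_injective_of_mul h)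
    simp only [decodingProb_succ, hrec]
    rw [Finset.prod_range_succ' _ (n + 1)]
    generalize ∏ i ∈ range (n + 1), ∑ m ∈ Icc K (N (i + 1)),
      Bpmf m (N (i + 1)) (ε (i + 1)) * Pfr (Fintype.card F) m K = P
    rw [mul_comm P, ← average_reception, mul_assoc, Finset.sum_mul]
    simp only [Finset.sum_mul, ite_mul, zero_mul, mul_ite, mul_zero]

end Tandem

/-- the `h`-hop tandem network. Hop `i` (0-indexed, `i = 0, …, h-1`)
carries `N i` coded packets, each received with probability `1 - ε i`; the source
matrix `C` is uniformly random `N 0 × K`; intermediate node `i+1` recodes with an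
independent uniformly random matrix `G i` (realised as a uniformly random
`N (i+1) × N i` matrix applied to the received rows, which is equivalent to applying
a uniformly random `N (i+1) × |received|` matrix). The probability that the matrix of
received rows at the last node has rank `K` equals
`∏_{i=0}^{h-1} [∑_{m=K}^{N i} B(m, N i, ε i) P(m,K)]`. -/
theorem tandem_decoding_prob (q : ℕ) (F : Type) [Field F] [Fintype F] [DecidableEq F]
    (hF : Fintype.card F = q) (h K : ℕ) (hh : 1 ≤ h) (hK : 1 ≤ K)
    (N : ℕ → ℕ) (hN : ∀ i < h, K ≤ N i)
    (ε : ℕ → ℝ) (hε : ∀ i < h, 0 ≤ ε i ∧ ε i ≤ 1) :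
    ∑ ω ∈ Finset.univ.filter
        (fun ω : Matrix (Fin (N 0)) (Fin K) F × ((i : Fin h) → Fin (N i.1) → Bool) ×
            ((i : Fin h) → Matrix (Fin (N (i.1 + 1))) (Fin (N i.1)) F) =>
          (((held K N ω.1
                (fun i => if hi : i < h then ω.2.1 ⟨i, hi⟩ else fun _ => true)
                (fun i => if hi : i < h then ω.2.2 ⟨i, hi⟩ else 0)
                (h - 1)).submatrix
              (fun j : {j : Fin (N (h - 1)) //
                  (if hi : h - 1 < h then ω.2.1 ⟨h - 1, hi⟩ else fun _ => true) j = true} =>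
                (j : Fin (N (h - 1)))) id).rank = K)),
      ((Fintype.card (Matrix (Fin (N 0)) (Fin K) F) : ℝ))⁻¹ *
      (∏ i : Fin h, ((Fintype.card (Matrix (Fin (N (i.1 + 1))) (Fin (N i.1)) F) : ℝ))⁻¹) *
      (∏ i : Fin h, ∏ j : Fin (N i.1), (if ω.2.1 i j then (1 - ε i.1) else ε i.1)) =
    ∏ i ∈ Finset.range h, (∑ m ∈ Finset.Icc K (N i), Bpmf m (N i) (ε i) * Pfr q m K) := by
  classical
  subst hF
  obtain ⟨n, rfl⟩ : ∃ n, h = n + 1 := ⟨h - 1, by omega⟩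
  rw [← average_decodingProb, Finset.sum_filter, Fintype.sum_prod_type, Finset.mul_sum]
  refine Finset.sum_congr rfl fun C _ => ?_
  rw [Fintype.sum_prod_type, decodingProb, Finset.mul_sum]
  refine Finset.sum_congr rfl fun f _ => ?_
  rw [Finset.mul_sum]
  refine Finset.sum_congr rfl fun G _ => ?_
  have hdec : Decodes n N C f G ↔
      ((held K N C (extendPatterns f) (extendRecodings G) n).submatrix
        (fun j : {j // extendPatterns f n j = true} => (j : Fin (N n))) id).rank = K := by
    rw [Decodes, zeroRows_mulVec_injective_iff, ← Matrix.rank_eq_card_iff_mulVec_injective,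
      Fintype.card_fin]
  simp only [hdec, mul_ite, mul_zero, ← mul_assoc]
  rfl
end

section
/- Let q be a prime power, F_q a finite field with q elements, and let K ≥ 1, N_S, N_R ≥ 0, L ≥ 1 be integers. Fix subsets A_1, …, A_L ⊆ {1,…,N_S}, B ⊆ {1,…,N_S} and D_1, …, D_L ⊆ {1,…,N_R}. Let A = A_1 ∪ ⋯ ∪ A_L, m = |A|, m_D = |B|, m_RD = |A ∩ B| and m' = ∑_{j=1}^{L} |D_j|. Let C be a uniformly random N_S×K matrix over F_q and, independently, let G_j be a uniformly random N_R×|A_j| matrix over F_q for each j. Let C_D be the vertical stack of C_B (the rows of C indexed by B) and, for each j, (G_j)_{D_j} · C_{A_j} (the rows of G_j indexed by D_j times the rows of C indexed by A_j, columns of G_j matched to the elements of A_j in order). Then Pr[rank(C_D) = K] ≤ P2((m' + m_D, m − m_RD + m_D, m_D), K). -/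
open Finset

/-- Expected value of `g` at the codimension left after adding `m` uniform vectors to a subspace
of codimension `c`. -/
noncomputable def codimExpect (q : ℕ) (g : ℕ → ℝ) : ℕ → ℕ → ℝ
  | 0, c => g c
  | m + 1, c => ((q : ℝ) ^ c)⁻¹ * codimExpect q g m c +
      (1 - ((q : ℝ) ^ c)⁻¹) * codimExpect q g m (c - 1)

lemma Pfr_succ_right (q m K : ℕ) :
    Pfr q m (K + 1) = Pfr q m K * (1 - (q : ℝ) ^ ((K : ℤ) - (m : ℤ))) := by
  simp [Pfr, Finset.prod_range_succ]

lemma Pfr_succ_succ (q m K : ℕ) :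
    Pfr q (m + 1) (K + 1) = (1 - (q : ℝ) ^ (-((m : ℤ) + 1))) * Pfr q m K := by
  simp only [Pfr]
  rw [Finset.prod_range_succ']
  push_cast
  simp only [zero_sub, add_sub_add_right_eq_sub]
  ring

lemma Pfr_eq_zero {q m K : ℕ} (h : m < K) : Pfr q m K = 0 := by
  refine Finset.prod_eq_zero (Finset.mem_range.2 h) ?_
  simp

lemma Pfr_nonneg {q : ℕ} (hq : 1 ≤ q) (m K : ℕ) : 0 ≤ Pfr q m K := by
  rcases lt_or_ge m K with h | h
  · rw [Pfr_eq_zero h]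
  · refine Finset.prod_nonneg fun i hi => sub_nonneg.2 ?_
    have := Finset.mem_range.1 hi
    exact zpow_le_one_of_nonpos₀ (by exact_mod_cast hq) (by omega)

lemma Pfr_antitone {q : ℕ} (hq : 1 ≤ q) (m : ℕ) : Antitone (Pfr q m) := by
  refine antitone_nat_of_succ_le fun K => ?_
  rw [Pfr_succ_right]
  refine mul_le_of_le_one_right (Pfr_nonneg hq m K) ?_
  have : (0 : ℝ) ≤ (q : ℝ) ^ ((K : ℤ) - (m : ℤ)) := by positivity
  linarith

lemma gaussBinom_eq_zero {q K r : ℕ} (h : K < r) : gaussBinom q K r = 0 := by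
  refine Finset.prod_eq_zero (Finset.mem_range.2 h) ?_
  simp

lemma gaussBinom_succ_succ (q K r : ℕ) :
    gaussBinom q (K + 1) (r + 1) =
      gaussBinom q K r * (((q : ℝ) ^ (K + 1) - 1) / ((q : ℝ) ^ (r + 1) - 1)) := by
  simp only [gaussBinom]
  rw [Finset.prod_range_succ']
  simp

lemma gaussBinom_self {q : ℕ} (hq : 1 < q) (K : ℕ) : gaussBinom q K K = 1 := by
  refine Finset.prod_eq_one fun i hi => div_self ?_
  have h1 : (1 : ℝ) < q := by exact_mod_cast hq
  have := Finset.mem_range.1 hi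
  exact (sub_pos.2 (one_lt_pow₀ h1 (by omega))).ne'

lemma Prk_eq (q m K r : ℕ) : Prk q m K r =
    (q : ℝ) ^ (-(m : ℤ) * ((K : ℤ) - (r : ℤ))) * gaussBinom q K r * Pfr q m r := rfl

lemma Prk_zero_left {q : ℕ} (K r : ℕ) : Prk q 0 K r = if r = 0 then 1 else 0 := by
  split_ifs with h
  · subst h
    simp [Prk, gaussBinom]
  · rw [Prk_eq, Pfr_eq_zero (by omega), mul_zero]

lemma Prk_self {q : ℕ} (hq : 1 < q) (m K : ℕ) : Prk q m K K = Pfr q m K := by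
  rw [Prk_eq, gaussBinom_self hq]
  simp

lemma Prk_succ_zero {q : ℕ} (hq : 1 < q) (m K : ℕ) :
    Prk q (m + 1) K 0 = ((q : ℝ) ^ K)⁻¹ * Prk q m K 0 := by
  have h0 : (q : ℝ) ≠ 0 := by positivity
  simp only [Prk, gaussBinom, Finset.prod_range_zero, mul_one]
  rw [← zpow_natCast, ← zpow_neg, ← zpow_add₀ h0]
  congr 1
  push_cast
  ring

lemma Prk_succ_succ {q : ℕ} (hq : 1 < q) (m K r : ℕ) :
    Prk q (m + 1) (K + 1) (r + 1) = ((q : ℝ) ^ (K + 1))⁻¹ * Prk q m (K + 1) (r + 1) +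
      (1 - ((q : ℝ) ^ (K + 1))⁻¹) * Prk q m K r := by
  have h1 : (1 : ℝ) < q := by exact_mod_cast hq
  have h0 : (q : ℝ) ≠ 0 := by positivity
  have hr : (q : ℝ) ^ (r + 1) - 1 ≠ 0 := (sub_pos.2 (one_lt_pow₀ h1 (by omega))).ne'
  simp only [Prk_eq, gaussBinom_succ_succ, Pfr_succ_succ, Pfr_succ_right q m r]
  have e1 : (q : ℝ) ^ (-((m + 1 : ℕ) : ℤ) * (((K + 1 : ℕ) : ℤ) - ((r + 1 : ℕ) : ℤ))) =
      (q : ℝ) ^ (-(m : ℤ) * ((K : ℤ) - (r : ℤ))) * ((q : ℝ) ^ r / (q : ℝ) ^ K) := by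
    rw [← zpow_natCast, ← zpow_natCast, ← zpow_sub₀ h0, ← zpow_add₀ h0]
    congr 1
    push_cast
    ring
  have e2 : (-(m : ℤ) * (((K + 1 : ℕ) : ℤ) - ((r + 1 : ℕ) : ℤ))) =
      (-(m : ℤ) * ((K : ℤ) - (r : ℤ))) := by
    push_cast
    ring
  have e3 : (q : ℝ) ^ ((r : ℤ) - (m : ℤ)) = (q : ℝ) ^ r / (q : ℝ) ^ m := by
    rw [zpow_sub₀ h0, zpow_natCast, zpow_natCast]
  have e4 : (q : ℝ) ^ (-((m : ℤ) + 1)) = ((q : ℝ) ^ m * q)⁻¹ := by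
    rw [zpow_neg, zpow_add₀ h0, zpow_natCast, zpow_one]
  rw [e1, e2, e3, e4]
  field_simp
  ring

lemma codimExpect_eq_sum {q : ℕ} (hq : 1 < q) (g : ℕ → ℝ) (m c : ℕ) :
    codimExpect q g m c = ∑ i ∈ Finset.range (c + 1), Prk q m c i * g (c - i) := by
  induction m generalizing c with
  | zero => simp [codimExpect, Prk_zero_left]
  | succ m ih =>
    rw [codimExpect, ih, ih]
    cases c with
    | zero => simp [Prk_self hq, Pfr]
    | succ c =>
      rw [Finset.sum_range_succ' _ (c + 1), Finset.sum_range_succ' _ (c + 1), Prk_succ_zero hq]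
      simp only [Prk_succ_succ hq, add_mul, Finset.sum_add_distrib, Finset.mul_sum, mul_add,
        Nat.add_sub_add_right, Nat.add_sub_cancel]
      simp only [mul_assoc]
      ring

lemma codimExpect_indicator {q : ℕ} (hq : 1 < q) (m c : ℕ) :
    codimExpect q (fun c => if c = 0 then 1 else 0) m c = Pfr q m c := by
  rw [codimExpect_eq_sum hq, Finset.sum_range_succ, Finset.sum_eq_zero]
  · simp [Prk_self hq]
  · intro i hi
    have := Finset.mem_range.1 hi
    rw [if_neg (by omega), mul_zero]

lemma codimExpect_antitone {q : ℕ} (hq : 1 ≤ q) {g : ℕ → ℝ} (hg : Antitone g) (m : ℕ) :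
    Antitone (codimExpect q g m) := by
  induction m with
  | zero => exact hg
  | succ m ih =>
    have hu : ∀ c : ℕ, ((q : ℝ) ^ c)⁻¹ ≤ 1 := fun c =>
      inv_le_one_of_one_le₀ (one_le_pow₀ (by exact_mod_cast hq))
    have hl : ∀ c : ℕ, 0 ≤ ((q : ℝ) ^ c)⁻¹ := fun c => by positivity
    refine antitone_nat_of_succ_le fun c => ?_
    simp only [codimExpect, Nat.add_sub_cancel]
    have h1 := ih (Nat.le_succ c)
    have h2 := ih (Nat.sub_le c 1)
    simp only [Nat.succ_eq_add_one] at h1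
    nlinarith [hu c, hu (c + 1), hl c, hl (c + 1)]

lemma P2_eq_codimExpect {q : ℕ} (hq : 1 < q) (K m n b : ℕ) :
    P2 q K (m + b) (n + b) b = codimExpect q (fun c => Pfr q m c * Pfr q n c) b K := by
  rw [codimExpect_eq_sum hq, P2]
  simp only [Nat.add_sub_cancel, mul_assoc]
  refine Finset.sum_subset (fun i hi => ?_) fun i hi hi' => ?_
  · have := Finset.mem_Icc.1 hi
    exact Finset.mem_range.2 (by omega)
  · simp only [Finset.mem_Icc, Finset.mem_range] at hi hi'
    by_cases h1 : m < K - i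
    · simp [Pfr_eq_zero h1]
    by_cases h2 : n < K - i
    · simp [Pfr_eq_zero h2]
    rw [Prk_eq, Pfr_eq_zero (m := b) (by omega)]
    simp

section Resampling

open scoped BigOperators

lemma expect_piecewise {ι : Type*} [Fintype ι] [DecidableEq ι] {E : ι → Type*}
    [∀ i, Fintype (E i)] [∀ i, Nonempty (E i)] (s : Finset ι) (f : (∀ i, E i) → ℝ) :
    𝔼 x, f x = 𝔼 x, 𝔼 y, f (s.piecewise y x) := by
  have hswap : Function.Involutive fun p : (∀ i, E i) × (∀ i, E i) =>
      (s.piecewise p.2 p.1, s.piecewise p.1 p.2) := by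
    intro p
    ext i <;> by_cases hi : i ∈ s <;> simp [hi]
  calc 𝔼 x, f x = 𝔼 x, 𝔼 _y : (∀ i, E i), f x := by simp
    _ = 𝔼 p : (∀ i, E i) × (∀ i, E i), f p.1 := by
      rw [← Finset.univ_product_univ, Finset.expect_product]
    _ = 𝔼 p : (∀ i, E i) × (∀ i, E i), f (s.piecewise p.2 p.1) :=
      (Fintype.expect_equiv hswap.toPerm _ _ fun p => rfl).symm
    _ = 𝔼 x, 𝔼 y, f (s.piecewise y x) := by
      rw [← Finset.univ_product_univ, Finset.expect_product]

variable {F U : Type*} [Field F] [AddCommGroup U] [Module F U] [FiniteDimensional F U]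

lemma codim_le_codim_sup_span_singleton (S : Submodule F U) (v : U) :
    Module.finrank F U - Module.finrank F S - 1 ≤
      Module.finrank F U - Module.finrank F ↥(S ⊔ F ∙ v) := by
  have h1 := Submodule.finrank_add_le_finrank_add_finrank S (F ∙ v)
  have h2 : Module.finrank F (F ∙ v) ≤ 1 := by
    simpa using finrank_span_le_card (R := F) ({v} : Set U)
  omega

variable [Fintype F]

open scoped Classical in
lemma inv_pow_codim_le_expect_mem {M : Type*} [AddCommGroup M] [Module F M] [Fintype M]
    (φ : M →ₗ[F] U) (S : Submodule F U) :
    ((Fintype.card F : ℝ) ^ (Module.finrank F U - Module.finrank F S))⁻¹ ≤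
      𝔼 x, if φ x ∈ S then (1 : ℝ) else 0 := by
  have hU : Finite U := Module.finite_of_finite F
  have hquotfin : Finite (U ⧸ S) := Module.finite_of_finite F
  have hquot : Nat.card (U ⧸ S) =
      Fintype.card F ^ (Module.finrank F U - Module.finrank F S) := by
    rw [Module.natCard_eq_pow_finrank (K := F), Nat.card_eq_fintype_card,
      Submodule.finrank_quotient]
  have hinj : Nat.card (M ⧸ S.comap φ) ≤ Nat.card (U ⧸ S) := by
    refine Nat.card_le_card_of_injective (Submodule.mapQ (S.comap φ) S φ le_rfl) ?_
    rw [← LinearMap.ker_eq_bot, Submodule.ker_mapQ, Submodule.mkQ_map_self]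
  have hcard : Fintype.card M ≤
      (Finset.univ.filter fun x => φ x ∈ S).card *
        Fintype.card F ^ (Module.finrank F U - Module.finrank F S) := by
    rw [← hquot, ← Nat.card_eq_fintype_card,
      Submodule.card_eq_card_quotient_mul_card (S.comap φ)]
    refine Nat.mul_le_mul (le_of_eq ?_) hinj
    rw [Nat.card_eq_fintype_card, ← Fintype.card_subtype]
    exact Fintype.card_congr (Equiv.refl _)
  rw [Fintype.expect_eq_sum_div_card, Finset.sum_boole]
  have hF : (0 : ℝ) < Fintype.card F := by exact_mod_cast Fintype.card_pos
  have hM : (0 : ℝ) < Fintype.card M := by exact_mod_cast Fintype.card_pos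
  rw [le_div_iff₀ hM, inv_mul_le_iff₀ (by positivity), mul_comm]
  exact_mod_cast hcard

lemma expect_codim_sup_span_singleton_le {M : Type*} [AddCommGroup M] [Module F M] [Fintype M]
    (φ : M →ₗ[F] U) (S : Submodule F U) {h : ℕ → ℝ} (hh : Antitone h) :
    𝔼 x, h (Module.finrank F U - Module.finrank F ↥(S ⊔ F ∙ φ x)) ≤
      ((Fintype.card F : ℝ) ^ (Module.finrank F U - Module.finrank F S))⁻¹ *
          h (Module.finrank F U - Module.finrank F S) +
        (1 - ((Fintype.card F : ℝ) ^ (Module.finrank F U - Module.finrank F S))⁻¹) *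
          h (Module.finrank F U - Module.finrank F S - 1) := by
  classical
  have hp := inv_pow_codim_le_expect_mem φ S
  set c := Module.finrank F U - Module.finrank F S with hc
  calc 𝔼 x, h (Module.finrank F U - Module.finrank F ↥(S ⊔ F ∙ φ x))
      ≤ 𝔼 x, (h (c - 1) - (if φ x ∈ S then (1 : ℝ) else 0) * (h (c - 1) - h c)) := by
        refine Finset.expect_le_expect fun x _ => ?_
        split_ifs with hx
        · rw [sup_of_le_left ((Submodule.span_singleton_le_iff_mem _ _).2 hx)]
          simp [hc]
        · simpa using hh (codim_le_codim_sup_span_singleton S (φ x))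
    _ = h (c - 1) - (𝔼 x, if φ x ∈ S then (1 : ℝ) else 0) * (h (c - 1) - h c) := by
        rw [Finset.expect_sub_distrib, Fintype.expect_const, Finset.expect_mul]
    _ ≤ _ := by
        have := mul_le_mul_of_nonneg_right hp (sub_nonneg.2 (hh (Nat.sub_le c 1)))
        linarith

lemma expect_codim_sup_le {ι : Type*} [Fintype ι] [DecidableEq ι] {E : ι → Type*}
    [∀ i, AddCommGroup (E i)] [∀ i, Module F (E i)] [∀ i, Fintype (E i)]
    (φ : ∀ i, E i →ₗ[F] U) {h : ℕ → ℝ} (hh : Antitone h) (s : Finset ι) (S : Submodule F U) :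
    𝔼 x : ∀ i, E i,
        h (Module.finrank F U - Module.finrank F ↥(S ⊔ s.sup fun i => F ∙ φ i (x i))) ≤
      codimExpect (Fintype.card F) h s.card (Module.finrank F U - Module.finrank F S) := by
  induction s using Finset.induction_on generalizing S with
  | empty =>
    refine Finset.expect_le Finset.univ_nonempty fun x _ => ?_
    rw [Finset.sup_empty, sup_bot_eq, Finset.card_empty, codimExpect]
  | insert a s ha ih =>
    rw [Finset.card_insert_of_notMem ha, codimExpect]
    refine le_trans ?_ (expect_codim_sup_span_singleton_le (φ a ∘ₗ LinearMap.proj a) S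
      (codimExpect_antitone Fintype.card_pos hh s.card))
    rw [expect_piecewise {a}, Finset.expect_comm]
    refine Finset.expect_le_expect fun y _ => ?_
    refine le_trans (le_of_eq ?_) (ih (S ⊔ F ∙ φ a (y a)))
    refine Finset.expect_congr rfl fun x _ => ?_
    have hs : (s.sup fun i => F ∙ φ i (({a} : Finset ι).piecewise y x i)) =
        s.sup fun i => F ∙ φ i (x i) := by
      refine Finset.sup_congr rfl fun i hi => ?_
      rw [Finset.piecewise_eq_of_notMem]
      intro hia
      exact ha (Finset.mem_singleton.1 hia ▸ hi)
    rw [Finset.sup_insert, hs, Finset.piecewise_eq_of_mem _ _ _ (Finset.mem_singleton_self a),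
      sup_assoc]

open scoped Classical in
lemma expect_sup_eq_top_le {ι : Type*} [Fintype ι] [DecidableEq ι] {E : ι → Type*}
    [∀ i, AddCommGroup (E i)] [∀ i, Module F (E i)] [∀ i, Fintype (E i)]
    (φ : ∀ i, E i →ₗ[F] U) (s : Finset ι) (S : Submodule F U) :
    (𝔼 x : ∀ i, E i, if (S ⊔ s.sup fun i => F ∙ φ i (x i)) = ⊤ then (1 : ℝ) else 0) ≤
      Pfr (Fintype.card F) s.card (Module.finrank F U - Module.finrank F S) := by
  have hanti : Antitone fun c : ℕ => if c = 0 then (1 : ℝ) else 0 := by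
    refine antitone_nat_of_succ_le fun c => ?_
    split_ifs <;> simp_all
  rw [← codimExpect_indicator Fintype.one_lt_card]
  refine le_trans (Finset.expect_le_expect fun x _ => ?_) (expect_codim_sup_le φ hanti s S)
  split_ifs with h1 h2 h2
  · exact le_rfl
  · rw [h1, finrank_top, Nat.sub_self] at h2
    exact absurd rfl h2
  · exact zero_le_one
  · exact le_rfl

end Resampling

lemma rank_eq_iff_span_row_eq_top {F ι : Type*} [Field F] [Finite ι] {K : ℕ}
    (M : Matrix ι (Fin K) F) :
    M.rank = K ↔ Submodule.span F (Set.range M.row) = ⊤ := by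
  rw [Matrix.rank_eq_finrank_span_row]
  constructor
  · intro h
    exact Submodule.eq_top_of_finrank_eq (by simpa using h)
  · intro h
    rw [h, finrank_top]
    simp

/-- The linear map sending relay coefficients to the combination of the rows of `C` in `A`. -/
noncomputable def rowCombination {F : Type*} [Field F] {n K : ℕ} (C : Matrix (Fin n) (Fin K) F)
    (A : Finset (Fin n)) : ({i : Fin n // i ∈ A} → F) →ₗ[F] (Fin K → F) :=
  Fintype.linearCombination F fun i : {i : Fin n // i ∈ A} => C i

lemma rowCombination_apply {F : Type*} [Field F] {n K : ℕ} (C : Matrix (Fin n) (Fin K) F)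
    (A : Finset (Fin n)) (g : {i : Fin n // i ∈ A} → F) (k : Fin K) :
    rowCombination C A g k = ∑ i, g i * C i.1 k := by
  simp [rowCombination, Fintype.linearCombination_apply]

lemma rowCombination_mem {F : Type*} [Field F] {n K : ℕ} (C : Matrix (Fin n) (Fin K) F)
    (A : Finset (Fin n)) (g : {i : Fin n // i ∈ A} → F) {W : Submodule F (Fin K → F)}
    (hW : ∀ i ∈ A, C i ∈ W) : rowCombination C A g ∈ W := by
  rw [rowCombination, Fintype.linearCombination_apply]
  exact W.sum_mem fun i _ => W.smul_mem _ (hW i i.2)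

lemma span_singleton_le_finset_sup {F U ι : Type*} [Field F] [AddCommGroup U] [Module F U]
    {s : Finset ι} (v : ι → U) {i : ι} (hi : i ∈ s) : F ∙ v i ≤ s.sup fun i => F ∙ v i :=
  Finset.le_sup (f := fun i => F ∙ v i) hi

lemma mem_finset_sup_span {F U ι : Type*} [Field F] [AddCommGroup U] [Module F U]
    {s : Finset ι} (v : ι → U) {i : ι} (hi : i ∈ s) : v i ∈ s.sup fun i => F ∙ v i :=
  span_singleton_le_finset_sup v hi (Submodule.mem_span_singleton_self _)

lemma span_row_stack_eq {F : Type*} [Field F] {K NS NR L : ℕ}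
    (A : Fin L → Finset (Fin NS)) (B : Finset (Fin NS)) (D : Fin L → Finset (Fin NR))
    (C : Matrix (Fin NS) (Fin K) F)
    (G : (j : Fin L) → Matrix (Fin NR) {i : Fin NS // i ∈ A j} F) :
    Submodule.span F (Set.range (Matrix.of (Sum.elim
        (fun (i : {i : Fin NS // i ∈ B}) (k : Fin K) => C i.1 k)
        (fun (p : Σ j : Fin L, {t : Fin NR // t ∈ D j}) (k : Fin K) =>
          ∑ i : {i : Fin NS // i ∈ A p.1}, G p.1 p.2.1 i * C i.1 k))).row) =
      (B.sup fun i => F ∙ C i) ⊔ (Finset.univ.sigma D).sup fun p =>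
        F ∙ rowCombination C (A p.1) (G p.1 p.2) := by
  refine le_antisymm (Submodule.span_le.2 ?_) (sup_le ?_ ?_)
  · rintro _ ⟨i | p, rfl⟩
    · exact Submodule.mem_sup_left (mem_finset_sup_span C i.2)
    · refine Submodule.mem_sup_right ?_
      have hp : (⟨p.1, p.2.1⟩ : Σ _ : Fin L, Fin NR) ∈ Finset.univ.sigma D :=
        Finset.mem_sigma.2 ⟨Finset.mem_univ _, p.2.2⟩
      convert mem_finset_sup_span (F := F) (fun p : Σ _ : Fin L, Fin NR =>
        rowCombination C (A p.1) (G p.1 p.2)) hp using 1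
      ext k
      simp [rowCombination_apply, Matrix.row]
  · refine Finset.sup_le fun i hi => (Submodule.span_singleton_le_iff_mem _ _).2 ?_
    exact Submodule.subset_span ⟨Sum.inl ⟨i, hi⟩, rfl⟩
  · refine Finset.sup_le fun p hp => (Submodule.span_singleton_le_iff_mem _ _).2 ?_
    refine Submodule.subset_span ⟨Sum.inr ⟨p.1, p.2, (Finset.mem_sigma.1 hp).2⟩, ?_⟩
    ext k
    simp [rowCombination_apply, Matrix.row]

lemma sup_rowCombination_le {F : Type*} [Field F] {K NS NR L : ℕ}
    (A : Fin L → Finset (Fin NS)) (B : Finset (Fin NS)) (D : Fin L → Finset (Fin NR))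
    (C : Matrix (Fin NS) (Fin K) F) (G : (p : Σ _ : Fin L, Fin NR) → {i // i ∈ A p.1} → F) :
    ((B.sup fun i => F ∙ C i) ⊔ (Finset.univ.sigma D).sup fun p =>
        F ∙ rowCombination C (A p.1) (G p)) ≤
      (B.sup fun i => F ∙ C i) ⊔ (Finset.univ.biUnion A \ B).sup fun i => F ∙ C i := by
  refine sup_le le_sup_left (Finset.sup_le fun p _ => ?_)
  refine (Submodule.span_singleton_le_iff_mem _ _).2 (rowCombination_mem C _ _ fun i hi => ?_)
  by_cases hB : i ∈ B
  · exact Submodule.mem_sup_left (mem_finset_sup_span C hB)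
  · exact Submodule.mem_sup_right (mem_finset_sup_span C
      (Finset.mem_sdiff.2 ⟨Finset.mem_biUnion.2 ⟨p.1, Finset.mem_univ _, hi⟩, hB⟩))

open scoped Classical BigOperators in
lemma expect_relay_le {F : Type*} [Field F] [Fintype F] {K NS NR L : ℕ}
    (A : Fin L → Finset (Fin NS)) (B : Finset (Fin NS)) (D : Fin L → Finset (Fin NR))
    (C : Matrix (Fin NS) (Fin K) F) :
    (𝔼 G : (j : Fin L) → Matrix (Fin NR) {i : Fin NS // i ∈ A j} F,
        if ((B.sup fun i => F ∙ C i) ⊔ (Finset.univ.sigma D).sup fun p =>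
          F ∙ rowCombination C (A p.1) (G p.1 p.2)) = ⊤ then (1 : ℝ) else 0) ≤
      Pfr (Fintype.card F) (∑ j, (D j).card)
          (K - Module.finrank F ↥(B.sup fun i => F ∙ C i)) *
        if ((B.sup fun i => F ∙ C i) ⊔ (Finset.univ.biUnion A \ B).sup fun i => F ∙ C i) = ⊤
          then 1 else 0 := by
  have hcurry := Fintype.expect_equiv
    (Equiv.piCurry fun (j : Fin L) (_ : Fin NR) => {i : Fin NS // i ∈ A j} → F)
    (fun G => if ((B.sup fun i => F ∙ C i) ⊔ (Finset.univ.sigma D).sup fun p =>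
      F ∙ rowCombination C (A p.1) (G p)) = ⊤ then (1 : ℝ) else 0)
    (fun G => if ((B.sup fun i => F ∙ C i) ⊔ (Finset.univ.sigma D).sup fun p =>
      F ∙ rowCombination C (A p.1) (G p.1 p.2)) = ⊤ then (1 : ℝ) else 0) (fun G => rfl)
  refine (le_of_eq hcurry.symm).trans ?_
  split_ifs with htop
  · have h := expect_sup_eq_top_le (fun p : Σ _ : Fin L, Fin NR => rowCombination C (A p.1))
      (Finset.univ.sigma D) (B.sup fun i => F ∙ C i)
    rw [Finset.card_sigma, Module.finrank_fin_fun] at h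
    rw [mul_one]
    exact h
  · rw [mul_zero]
    refine (Finset.expect_eq_zero fun G _ => if_neg fun h => htop ?_).le
    exact top_le_iff.1 (h ▸ sup_rowCombination_le A B D C G)

open scoped Classical BigOperators in
lemma expect_source_le {F : Type*} [Field F] [Fintype F] {K NS : ℕ} (m : ℕ)
    {B R : Finset (Fin NS)} (hBR : Disjoint R B) :
    (𝔼 C : Fin NS → Fin K → F,
      Pfr (Fintype.card F) m (K - Module.finrank F ↥(B.sup fun i => F ∙ C i)) *
        if ((B.sup fun i => F ∙ C i) ⊔ R.sup fun i => F ∙ C i) = ⊤ then 1 else 0) ≤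
      codimExpect (Fintype.card F)
        (fun c => Pfr (Fintype.card F) m c * Pfr (Fintype.card F) R.card c) B.card K := by
  have hq : 1 ≤ Fintype.card F := Fintype.card_pos
  have hanti : Antitone fun c =>
      Pfr (Fintype.card F) m c * Pfr (Fintype.card F) R.card c := fun a b hab =>
    mul_le_mul (Pfr_antitone hq m hab) (Pfr_antitone hq _ hab) (Pfr_nonneg hq _ _)
      (Pfr_nonneg hq _ _)
  have hB := expect_codim_sup_le (fun _ : Fin NS => LinearMap.id (R := F) (M := Fin K → F))
    hanti B ⊥
  rw [finrank_bot, Nat.sub_zero, Module.finrank_fin_fun] at hB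
  refine le_trans ?_ hB
  rw [expect_piecewise R]
  refine Finset.expect_le_expect fun C _ => ?_
  have hsupB : ∀ C' : Fin NS → Fin K → F,
      (B.sup fun i => F ∙ R.piecewise C' C i) = B.sup fun i => F ∙ C i := fun C' =>
    Finset.sup_congr rfl fun i hi => by
      rw [Finset.piecewise_eq_of_notMem _ _ _ (Finset.disjoint_right.1 hBR hi)]
  have hsupR : ∀ C' : Fin NS → Fin K → F,
      (R.sup fun i => F ∙ R.piecewise C' C i) = R.sup fun i => F ∙ C' i := fun C' =>
    Finset.sup_congr rfl fun i hi => by rw [Finset.piecewise_eq_of_mem _ _ _ hi]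
  rw [bot_sup_eq]
  refine (Finset.expect_congr rfl fun C' _ => ?_).trans_le
    ((Finset.mul_expect Finset.univ (fun C' : Fin NS → Fin K → F =>
      if ((B.sup fun i => F ∙ C i) ⊔ R.sup fun i => F ∙ C' i) = ⊤ then (1 : ℝ) else 0)
      (Pfr (Fintype.card F) m (K - Module.finrank F ↥(B.sup fun i => F ∙ C i)))).symm.trans_le ?_)
  · rw [hsupB, hsupR]
  refine mul_le_mul_of_nonneg_left ?_ (Pfr_nonneg hq _ _)
  have h := expect_sup_eq_top_le (fun _ : Fin NS => LinearMap.id (R := F) (M := Fin K → F))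
    R (B.sup fun i => F ∙ C i)
  rw [Module.finrank_fin_fun] at h
  exact h

/-- fixed reception sets `A j` (relays, from the source), `B`
(destination, from the source) and `D j` (destination, from relay `j`). `C` is a
uniformly random `N_S × K` matrix and each `G j` an independent uniformly random
`N_R × |A j|` matrix (columns indexed by the elements of `A j`). The destination
matrix `C_D` stacks `C_B` and the matrices `(G j)_{D j} · C_{A j}`. Then
`Pr[rank C_D = K] ≤ P2((m' + m_D, m - m_RD + m_D, m_D), K)` where
`m = |⋃ A j|`, `m_D = |B|`, `m_RD = |(⋃ A j) ∩ B|`, `m' = ∑ j |D j|`. -/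
theorem fixed_sets_rank_bound (q : ℕ) (F : Type) [Field F] [Fintype F] [DecidableEq F]
    (hF : Fintype.card F = q) (K NS NR L : ℕ) (hK : 1 ≤ K) (hL : 1 ≤ L)
    (A : Fin L → Finset (Fin NS)) (B : Finset (Fin NS)) (D : Fin L → Finset (Fin NR)) :
    ((Finset.univ.filter
        (fun ω : Matrix (Fin NS) (Fin K) F ×
            ((j : Fin L) → Matrix (Fin NR) {i : Fin NS // i ∈ A j} F) =>
          (Matrix.of (Sum.elim
              (fun (i : {i : Fin NS // i ∈ B}) (k : Fin K) => ω.1 i.1 k)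
              (fun (p : Σ j : Fin L, {t : Fin NR // t ∈ D j}) (k : Fin K) =>
                ∑ i : {i : Fin NS // i ∈ A p.1},
                  ω.2 p.1 p.2.1 i * ω.1 i.1 k))).rank = K)).card : ℝ) /
      (Fintype.card (Matrix (Fin NS) (Fin K) F ×
        ((j : Fin L) → Matrix (Fin NR) {i : Fin NS // i ∈ A j} F)) : ℝ) ≤
    P2 q K ((∑ j, (D j).card) + B.card)
      ((Finset.univ.biUnion A).card - ((Finset.univ.biUnion A) ∩ B).card + B.card)
      B.card := by
  classical
  subst hF
  have hn : (Finset.univ.biUnion A).card - ((Finset.univ.biUnion A) ∩ B).card =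
      (Finset.univ.biUnion A \ B).card := by
    rw [Finset.card_sdiff, Finset.inter_comm]
  rw [hn, P2_eq_codimExpect Fintype.one_lt_card, ← Finset.sum_boole,
    ← Fintype.expect_eq_sum_div_card, ← Finset.univ_product_univ, Finset.expect_product]
  refine le_trans (Finset.expect_le_expect fun C _ => ?_)
    (expect_source_le _ (Finset.sdiff_disjoint (s := B) (t := Finset.univ.biUnion A)))
  refine le_trans (le_of_eq ?_) (expect_relay_le A B D C)
  refine Finset.expect_congr rfl fun G _ => ?_
  simp only [rank_eq_iff_span_row_eq_top, span_row_stack_eq]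
end

section
/- In the RF relay model with L ≥ 1 relays, the probability of successful decoding is at most ∑_{m=K}^{N_S} B(m, N_S, ε̃) · P(m, K), where ε̃ = ε_SD · ∏_{j=1}^{L} ε_SRj; that is, the decoding probability is upper-bounded by the decoding probability of a point-to-point link with N_S coded transmissions and packet erasure probability ε̃. -/
open Finset

/-- Law of the coordinatewise image `φ ∘ c` of a product weight. -/
lemma sum_prod_mul_comp {ι α β : Type*} [Fintype ι] [DecidableEq ι] [Fintype α] [DecidableEq α]
    [Fintype β] [DecidableEq β] (φ : α → β) (w : α → ℝ) (f : (ι → β) → ℝ) :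
    ∑ c : ι → α, (∏ i, w (c i)) * f (fun i => φ (c i)) =
      ∑ u : ι → β, (∏ i, ∑ x with φ x = u i, w x) * f u := by
  rw [← Finset.sum_fiberwise Finset.univ (fun c : ι → α => fun i => φ (c i))]
  refine Finset.sum_congr rfl fun u _ => ?_
  rw [Finset.prod_univ_sum, Finset.sum_mul]
  refine Finset.sum_congr ?_ fun c hc => ?_
  · ext c
    simp [funext_iff]
  · have h : (fun i => φ (c i)) = u := by
      ext1 i
      simpa using Fintype.mem_piFinset.mp hc i
    rw [h]

/-- A product of Bernoulli weights has total mass one. -/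
lemma sum_prod_bernoulli {ι : Type*} [Fintype ι] [DecidableEq ι] (ε : ι → ℝ) :
    ∑ a : ι → Bool, ∏ j, (if a j then 1 - ε j else ε j) = 1 := by
  have h := Finset.prod_univ_sum (fun _ : ι => (Finset.univ : Finset Bool))
    (fun j b => if b then 1 - ε j else ε j)
  rw [Fintype.piFinset_univ] at h
  rw [← h]
  simp

open Classical in
/-- Whether a packet is received on the direct link or on one of the links indexed by `κ`. -/
noncomputable def receivedOnSomeLink {κ : Type*} (b : Bool) (a : κ → Bool) : Bool :=
  b || decide (∃ j, a j = true)

lemma receivedOnSomeLink_eq_true {κ : Type*} {b : Bool} {a : κ → Bool} :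
    receivedOnSomeLink b a = true ↔ b = true ∨ ∃ j, a j = true := by
  simp [receivedOnSomeLink]

/-- A packet is lost on all links with probability the product of the erasure probabilities. -/
lemma sum_fiber_union_weight {κ : Type*} [Fintype κ] [DecidableEq κ] (δ : ℝ) (ε : κ → ℝ)
    (v : Bool) :
    ∑ x : Bool × (κ → Bool) with receivedOnSomeLink x.1 x.2 = v,
      (if x.1 then 1 - δ else δ) * ∏ j, (if x.2 j then 1 - ε j else ε j) =
    if v then 1 - δ * ∏ j, ε j else δ * ∏ j, ε j := by
  have hfalse : ∑ x : Bool × (κ → Bool) with receivedOnSomeLink x.1 x.2 = false,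
      (if x.1 then 1 - δ else δ) * ∏ j, (if x.2 j then 1 - ε j else ε j) = δ * ∏ j, ε j := by
    rw [Finset.sum_eq_single (false, fun _ => false)]
    · simp
    · rintro ⟨b, a⟩ h hne
      exfalso
      apply hne
      simp only [receivedOnSomeLink, Finset.mem_filter, Finset.mem_univ, true_and,
        Bool.or_eq_false_iff, decide_eq_false_iff_not, not_exists, Bool.not_eq_true] at h
      exact Prod.ext h.1 (funext h.2)
    · simp [receivedOnSomeLink]
  cases v with
  | false => simpa using hfalse
  | true =>
    have htotal : ∑ x : Bool × (κ → Bool),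
        (if x.1 then 1 - δ else δ) * ∏ j, (if x.2 j then 1 - ε j else ε j) = 1 := by
      rw [Fintype.sum_prod_type, Fintype.sum_bool]
      simp only [if_true, Bool.false_eq_true, if_false]
      rw [← Finset.mul_sum, ← Finset.mul_sum, sum_prod_bernoulli]
      ring
    rw [← Finset.sum_fiberwise Finset.univ
      (fun x : Bool × (κ → Bool) => receivedOnSomeLink x.1 x.2),
      Fintype.sum_bool, hfalse] at htotal
    simp only [if_true]
    linarith

/-- The set of packets received on at least one of several independent erasure links has the law
of the packets received on a single link. -/
lemma sum_union_reception {ι κ : Type*} [Fintype ι] [DecidableEq ι] [Fintype κ] [DecidableEq κ]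
    (δ : ℝ) (ε : κ → ℝ) (f : (ι → Bool) → ℝ) :
    ∑ b : ι → Bool, ∑ a : κ → ι → Bool,
      ((∏ i, (if b i then 1 - δ else δ)) *
        ∏ j, ∏ i, (if a j i then 1 - ε j else ε j)) *
        f (fun i => receivedOnSomeLink (b i) fun j => a j i) =
    ∑ u : ι → Bool,
      (∏ i, (if u i then 1 - δ * ∏ j, ε j else δ * ∏ j, ε j)) * f u := by
  have h := sum_prod_mul_comp (ι := ι)
    (fun x : Bool × (κ → Bool) => receivedOnSomeLink x.1 x.2)
    (fun x => (if x.1 then 1 - δ else δ) * ∏ j, (if x.2 j then 1 - ε j else ε j)) f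
  simp_rw [sum_fiber_union_weight] at h
  rw [← h, ← Fintype.sum_prod_type']
  refine Fintype.sum_equiv
    (((Equiv.refl (ι → Bool)).prodCongr (Equiv.piComm fun _ _ => Bool)).trans
      (Equiv.arrowProdEquivProdArrow ι (fun _ => Bool) (fun _ => κ → Bool)).symm) _ _ ?_
  rintro ⟨b, a⟩
  simp only [Finset.prod_mul_distrib]
  rw [Finset.prod_comm]
  rfl

/-- Binomial law of the number of received packets. -/
lemma sum_bernoulli_apply_card {ι : Type*} [Fintype ι] [DecidableEq ι] (ε : ℝ) (g : ℕ → ℝ) :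
    ∑ u : ι → Bool, (∏ i, (if u i then 1 - ε else ε)) * g #{i | u i = true} =
      ∑ m ∈ Finset.range (Fintype.card ι + 1),
        ((Fintype.card ι).choose m : ℝ) * (1 - ε) ^ m * ε ^ (Fintype.card ι - m) * g m := by
  have h := Finset.sum_powerset_apply_card
    (fun m => (1 - ε) ^ m * ε ^ (Fintype.card ι - m) * g m) (x := (Finset.univ : Finset ι))
  rw [Finset.card_univ] at h
  simp only [nsmul_eq_mul] at h
  calc _ = _ := ?_
    _ = _ := h
    _ = _ := by simp only [mul_assoc]
  refine Finset.sum_nbij' (fun u => ({i | u i = true} : Finset ι)) (fun s i => decide (i ∈ s))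
    ?_ ?_ ?_ ?_ ?_
  · simp
  · simp
  · intro u _; ext i; simp
  · intro s _; ext i; simp
  · intro u _
    rw [Finset.prod_ite, Finset.prod_const, Finset.prod_const, ← Finset.compl_filter,
      Finset.card_compl]

/-- If the coefficient matrix at the destination has full column rank, then so does the matrix of
the source packets received by the destination or by some relay. -/
lemma linearIndependent_col_of_rank_stack {F ι κ τ : Type*} [Field F] [Fintype ι] {K : ℕ}
    [Fintype κ] [Fintype τ]
    (C : Matrix ι (Fin K) F) (b : ι → Bool) (a : κ → ι → Bool) (G : κ → Matrix τ ι F)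
    (d : κ → τ → Bool)
    (h : (Matrix.of (Sum.elim
      (fun (i : {i : ι // b i = true}) (k : Fin K) => C i.1 k)
      (fun (p : Σ j : κ, {t : τ // d j t = true}) (k : Fin K) =>
        ∑ i : {i : ι // a p.1 i = true}, G p.1 p.2.1 i.1 * C i.1 k))).rank = K) :
    LinearIndependent F (fun (k : Fin K)
      (i : {i : ι // receivedOnSomeLink (b i) (fun j => a j i) = true}) => C i.1 k) := by
  rw [Matrix.rank_eq_finrank_span_cols] at h
  have hli := linearIndependent_iff_card_eq_finrank_span.mpr
    ((Fintype.card_fin K).trans h.symm)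
  rw [Fintype.linearIndependent_iff] at hli ⊢
  intro v hv
  have hrow : ∀ i, receivedOnSomeLink (b i) (fun j => a j i) = true → ∑ k, v k * C i k = 0 := by
    intro i hi
    simpa using congrFun hv ⟨i, hi⟩
  refine hli v (funext ?_)
  rintro (⟨i, hi⟩ | ⟨j, t, ht⟩)
  · simpa using hrow i (receivedOnSomeLink_eq_true.mpr (Or.inl hi))
  · simp only [Finset.sum_apply, Pi.smul_apply, smul_eq_mul, Matrix.col_apply, Matrix.of_apply,
      Sum.elim_inr, Pi.zero_apply, Finset.mul_sum]
    rw [Finset.sum_comm]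
    refine Finset.sum_eq_zero fun i _ => ?_
    have hi := hrow i.1 (receivedOnSomeLink_eq_true.mpr (Or.inr ⟨j, i.2⟩))
    calc _ = G j t i.1 * ∑ k, v k * C i.1 k := by
          rw [Finset.mul_sum]
          exact Finset.sum_congr rfl fun k _ => by ring
      _ = 0 := by rw [hi, mul_zero]

/-- `Pfr q m K` is the proportion of linearly independent `K`-tuples in `F ^ m`. -/
lemma card_linearIndependent_eq_Pfr (F ι : Type*) [Field F] [Fintype F] [Fintype ι] (K : ℕ) :
    (Nat.card {s : Fin K → ι → F // LinearIndependent F s} : ℝ) =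
      Pfr (Fintype.card F) (Fintype.card ι) K * Nat.card (Fin K → ι → F) := by
  classical
  have hq : (0 : ℝ) < Fintype.card F := by exact_mod_cast Fintype.card_pos
  rcases lt_or_ge (Fintype.card ι) K with hlt | hle
  · have : IsEmpty {s : Fin K → ι → F // LinearIndependent F s} := by
      refine ⟨fun s => ?_⟩
      have := s.2.fintype_card_le_finrank
      simp at this
      omega
    rw [Nat.card_of_isEmpty, Pfr,
      Finset.prod_eq_zero (Finset.mem_range.mpr hlt) (by simp)]
    simp
  · have hcard := card_linearIndependent (K := F) (V := ι → F) (k := K) (by simpa using hle)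
    rw [Module.finrank_fintype_fun_eq_card] at hcard
    rw [hcard, Pfr, Nat.card_eq_fintype_card, Fintype.card_fun, Fintype.card_fun,
      Fintype.card_fin, Nat.cast_prod, Finset.prod_range]
    push_cast
    rw [← Fin.prod_const K, ← Finset.prod_mul_distrib]
    refine Finset.prod_congr rfl fun i _ => ?_
    rw [Nat.cast_sub (Nat.pow_le_pow_right Fintype.card_pos (i.2.le.trans hle)),
      zpow_sub₀ hq.ne', sub_mul, zpow_natCast, zpow_natCast,
      div_mul_cancel₀ _ (pow_pos hq _).ne']
    push_cast
    ring

open Classical in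
/-- Indicator that the rows of `C` selected by `u` form a matrix of full column rank. -/
noncomputable def fullRankIndicator {F ι : Type*} [Field F] {K : ℕ} (C : Matrix ι (Fin K) F)
    (u : ι → Bool) : ℝ :=
  if LinearIndependent F (fun (k : Fin K) (i : {i : ι // u i = true}) => C i.1 k) then 1 else 0

/-- Probability that the received rows of a uniformly random matrix have full column rank. -/
lemma sum_uniform_linearIndependent_rows (F ι : Type*) [Field F] [Fintype F] [DecidableEq F]
    [Fintype ι] [DecidableEq ι] (K : ℕ) (u : ι → Bool) :
    ∑ C : Matrix ι (Fin K) F, (Fintype.card (Matrix ι (Fin K) F) : ℝ)⁻¹ *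
      fullRankIndicator C u =
      Pfr (Fintype.card F) #{i | u i = true} K := by
  classical
  let e : Matrix ι (Fin K) F ≃
      (Fin K → {i : ι // u i = true} → F) × ({i : ι // ¬ u i = true} → Fin K → F) :=
    (Equiv.piEquivPiSubtypeProd (fun i => u i = true) fun _ => Fin K → F).trans
      ((Equiv.piComm _).prodCongr (Equiv.refl _))
  have hcount : Nat.card {C : Matrix ι (Fin K) F //
      LinearIndependent F (fun (k : Fin K) (i : {i : ι // u i = true}) => C i.1 k)} =
      Nat.card {s : Fin K → {i : ι // u i = true} → F // LinearIndependent F s} *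
        Nat.card ({i : ι // ¬ u i = true} → Fin K → F) := by
    rw [← Nat.card_prod, ← Nat.card_congr (Equiv.prodSubtypeFstEquivSubtypeProd
      (α := Fin K → {i : ι // u i = true} → F) (β := {i : ι // ¬ u i = true} → Fin K → F)
      (p := fun s => LinearIndependent F s))]
    refine Nat.card_congr (e.subtypeEquiv fun C => ?_)
    have he : (e C).1 = fun k i => C i.1 k := rfl
    rw [he]
  have htotal := Nat.card_congr e
  rw [Nat.card_prod] at htotal
  have hpos : (0 : ℝ) < Nat.card (Matrix ι (Fin K) F) := by exact_mod_cast Nat.card_pos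
  simp only [fullRankIndicator]
  rw [← Finset.mul_sum, Finset.sum_boole, ← Fintype.card_subtype, ← Nat.card_eq_fintype_card,
    ← Nat.card_eq_fintype_card, hcount, Nat.cast_mul, card_linearIndependent_eq_Pfr,
    Fintype.card_subtype, mul_assoc, ← Nat.cast_mul, ← htotal]
  field_simp

/-- simplified bound: in the RF model with `L ≥ 1` relays (same sample
space, weights and decoding event as in the general RF model: `C` a uniformly random
`N_S × K` matrix; `b` the destination reception pattern from the source; `a j` the
reception pattern of relay `j`; `G j` the recoding matrix of relay `j`, realised as a
uniformly random `N_R × N_S` matrix of which only the columns of the packets received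
by relay `j` are used; `d j` the destination reception pattern from relay `j`), the
probability of successful decoding is at most `∑_{m=K}^{N_S} B(m, N_S, ε̃) P(m, K)`,
where `ε̃ = ε_SD · ∏_j ε_SR j`. -/
theorem rf_simplified_bound (q : ℕ) (F : Type) [Field F] [Fintype F]
    [DecidableEq F] (hF : Fintype.card F = q) (K NS NR L : ℕ) (hK : 1 ≤ K)
    (hNS : K ≤ NS) (hL : 1 ≤ L)
    (εSD : ℝ) (εSR εRD : Fin L → ℝ) (hSD : εSD ∈ Set.Icc (0:ℝ) 1)
    (hSR : ∀ j, εSR j ∈ Set.Icc (0:ℝ) 1) (hRD : ∀ j, εRD j ∈ Set.Icc (0:ℝ) 1) :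
    ∑ ω ∈ Finset.univ.filter
        (fun ω : Matrix (Fin NS) (Fin K) F × (Fin NS → Bool) ×
            (Fin L → Fin NS → Bool) × (Fin L → Matrix (Fin NR) (Fin NS) F) ×
            (Fin L → Fin NR → Bool) =>
          ((Matrix.of (Sum.elim
              (fun (i : {i : Fin NS // ω.2.1 i = true}) (k : Fin K) => ω.1 i.1 k)
              (fun (p : Σ j : Fin L, {t : Fin NR // ω.2.2.2.2 j t = true}) (k : Fin K) =>
                ∑ i : {i : Fin NS // ω.2.2.1 p.1 i = true},
                  ω.2.2.2.1 p.1 p.2.1 i.1 * ω.1 i.1 k))).rank = K)),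
      ((Fintype.card (Matrix (Fin NS) (Fin K) F) : ℝ))⁻¹ *
      (∏ _j : Fin L, ((Fintype.card (Matrix (Fin NR) (Fin NS) F) : ℝ))⁻¹) *
      (∏ i : Fin NS, (if ω.2.1 i then (1 - εSD) else εSD)) *
      (∏ j : Fin L, ∏ i : Fin NS, (if ω.2.2.1 j i then (1 - εSR j) else εSR j)) *
      (∏ j : Fin L, ∏ t : Fin NR, (if ω.2.2.2.2 j t then (1 - εRD j) else εRD j)) ≤
    ∑ m ∈ Finset.Icc K NS, Bpmf m NS (εSD * ∏ j, εSR j) * Pfr q m K := by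
  classical
  subst hF
  set cC : ℝ := (Fintype.card (Matrix (Fin NS) (Fin K) F) : ℝ)⁻¹
  set cG : ℝ := ∏ _j : Fin L, (Fintype.card (Matrix (Fin NR) (Fin NS) F) : ℝ)⁻¹ with hcG
  have weight_nonneg : ∀ (ε : ℝ) (v : Bool), ε ∈ Set.Icc (0 : ℝ) 1 →
      0 ≤ (if v then 1 - ε else ε) := by
    rintro ε v ⟨h0, h1⟩
    split_ifs <;> linarith
  have hG : ∑ _G : Fin L → Matrix (Fin NR) (Fin NS) F, cG = 1 := by
    rw [Finset.sum_const, Finset.card_univ, Fintype.card_fun, hcG, Finset.prod_const,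
      Finset.card_univ, nsmul_eq_mul, Nat.cast_pow, ← mul_pow, mul_inv_cancel₀, one_pow]
    exact_mod_cast Fintype.card_ne_zero
  have hd : ∑ d : Fin L → Fin NR → Bool,
      ∏ j, ∏ t, (if d j t then 1 - εRD j else εRD j) = 1 := by
    have h := Finset.prod_univ_sum (fun _ : Fin L => (Finset.univ : Finset (Fin NR → Bool)))
      (fun j x => ∏ t, (if x t then 1 - εRD j else εRD j))
    rw [Fintype.piFinset_univ] at h
    rw [← h]
    exact Finset.prod_eq_one fun j _ => sum_prod_bernoulli fun _ => εRD j
  calc _ ≤ ∑ ω : Matrix (Fin NS) (Fin K) F × (Fin NS → Bool) ×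
            (Fin L → Fin NS → Bool) × (Fin L → Matrix (Fin NR) (Fin NS) F) ×
            (Fin L → Fin NR → Bool),
        cC * cG *
        (∏ i : Fin NS, (if ω.2.1 i then (1 - εSD) else εSD)) *
        (∏ j : Fin L, ∏ i : Fin NS, (if ω.2.2.1 j i then (1 - εSR j) else εSR j)) *
        (∏ j : Fin L, ∏ t : Fin NR, (if ω.2.2.2.2 j t then (1 - εRD j) else εRD j)) *
        fullRankIndicator ω.1 (fun i => receivedOnSomeLink (ω.2.1 i) fun j => ω.2.2.1 j i) := by
        rw [Finset.sum_filter]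
        refine Finset.sum_le_sum fun ω _ => ?_
        split_ifs with h
        · have hli := linearIndependent_col_of_rank_stack ω.1 ω.2.1 ω.2.2.1 ω.2.2.2.1
            ω.2.2.2.2 h
          rw [fullRankIndicator, if_pos hli, mul_one]
        · have h1 : 0 ≤ fullRankIndicator ω.1 (fun i => receivedOnSomeLink (ω.2.1 i) fun j => ω.2.2.1 j i) := by
            unfold fullRankIndicator
            split_ifs <;> norm_num
          have h2 : 0 ≤ cC := by positivity
          have h3 : 0 ≤ cG := Finset.prod_nonneg fun _ _ => by positivity
          exact mul_nonneg (mul_nonneg (mul_nonneg (mul_nonneg (mul_nonneg h2 h3)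
            (Finset.prod_nonneg fun i _ => weight_nonneg _ _ hSD))
            (Finset.prod_nonneg fun j _ => Finset.prod_nonneg fun i _ =>
              weight_nonneg _ _ (hSR j)))
            (Finset.prod_nonneg fun j _ => Finset.prod_nonneg fun i _ =>
              weight_nonneg _ _ (hRD j))) h1
    _ = ∑ C : Matrix (Fin NS) (Fin K) F, ∑ b : Fin NS → Bool, ∑ a : Fin L → Fin NS → Bool,
        (((∏ i, (if b i then 1 - εSD else εSD)) *
          ∏ j, ∏ i, (if a j i then 1 - εSR j else εSR j)) *
          (cC * fullRankIndicator C (fun i => receivedOnSomeLink (b i) fun j => a j i))) *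
        ((∑ _G : Fin L → Matrix (Fin NR) (Fin NS) F, cG) *
          ∑ d : Fin L → Fin NR → Bool,
            ∏ j, ∏ t, (if d j t then 1 - εRD j else εRD j)) := by
        simp only [Fintype.sum_prod_type]
        refine Finset.sum_congr rfl fun C _ => Finset.sum_congr rfl fun b _ =>
          Finset.sum_congr rfl fun a _ => ?_
        rw [Finset.sum_mul_sum, Finset.mul_sum]
        refine Finset.sum_congr rfl fun G _ => ?_
        rw [Finset.mul_sum]
        exact Finset.sum_congr rfl fun d _ => by ring
    _ = ∑ C : Matrix (Fin NS) (Fin K) F, ∑ u : Fin NS → Bool,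
        (∏ i, (if u i then 1 - εSD * ∏ j, εSR j else εSD * ∏ j, εSR j)) * (cC * fullRankIndicator C u) := by
        refine Finset.sum_congr rfl fun C _ => ?_
        rw [hG, hd]
        simp only [mul_one]
        exact sum_union_reception εSD εSR fun u => cC * fullRankIndicator C u
    _ = ∑ u : Fin NS → Bool,
        (∏ i, (if u i then 1 - εSD * ∏ j, εSR j else εSD * ∏ j, εSR j)) *
          Pfr (Fintype.card F) #{i | u i = true} K := by
        rw [Finset.sum_comm]
        refine Finset.sum_congr rfl fun u _ => ?_
        rw [← Finset.mul_sum, ← sum_uniform_linearIndependent_rows F (Fin NS) K u]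
    _ = ∑ m ∈ Finset.range (NS + 1),
        Bpmf m NS (εSD * ∏ j, εSR j) * Pfr (Fintype.card F) m K := by
        rw [sum_bernoulli_apply_card _ fun m => Pfr (Fintype.card F) m K, Fintype.card_fin]
        rfl
    _ = _ := by
        refine (Finset.sum_subset (fun m hm => ?_) fun m _ hm => ?_).symm
        · rw [Finset.mem_Icc] at hm
          exact Finset.mem_range.mpr (by omega)
        · have hlt : m < K := by simp_all
          rw [Pfr, Finset.prod_eq_zero (Finset.mem_range.mpr hlt) (by simp), mul_zero]
end
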